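/- arXiv:1910.05073 — 7 statements merged into one kernel-verified Lean document; each statement's English description precedes it below -/
import Mathlib

section
/- For any u, v in the unitary group U(H), the geodesic distance satisfies d(u,v) = max_{i=1,...,N} |arg λ_i|, where λ_1, ..., λ_N are the eigenvalues (with multiplicity) of u^{-1}v and arg : U(1) → (−π, π] is the principal argument (the inverse of θ ↦ e^{iθ} on (−π, π]). -/
noncomputable section

abbrev Hsp (N : ℕ) : Type := EuclideanSpace ℂ (Fin N)

abbrev Op (N : ℕ) : Type := Hsp N →L[ℂ] Hsp N

/-- A map `γ : ℝ → E` is piecewise C¹ on `[a,b]` if there is a partition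
`a = τ 0 ≤ τ 1 ≤ ⋯ ≤ τ n = b` such that `γ` is C¹ on each subinterval. -/
def PiecewiseC1On {E : Type*} [NormedAddCommGroup E] [NormedSpace ℝ E]
    (γ : ℝ → E) (a b : ℝ) : Prop :=
  ∃ (n : ℕ) (τ : ℕ → ℝ), τ 0 = a ∧ τ n = b ∧ (∀ i < n, τ i ≤ τ (i + 1)) ∧
    ∀ i < n, ContDiffOn ℝ 1 γ (Set.Icc (τ i) (τ (i + 1)))

/-- The length `L(γ) = ∫_a^b ‖γ'(t)‖ dt` of a curve. -/
def pathLength {E : Type*} [NormedAddCommGroup E] [NormedSpace ℝ E]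
    (γ : ℝ → E) (a b : ℝ) : ℝ :=
  ∫ t in a..b, ‖deriv γ t‖

/-- Geodesic distance on the unitary group of `EuclideanSpace ℂ (Fin N)`, for the
Finsler metric given by the operator norm: the infimum of lengths of piecewise C¹
curves in the unitary group joining `u` to `v`. -/
def geoDist (N : ℕ) (u v : Op N) : ℝ :=
  sInf {l | ∃ (a b : ℝ) (γ : ℝ → Op N), a ≤ b ∧ PiecewiseC1On γ a b ∧
    (∀ t ∈ Set.Icc a b, γ t ∈ unitary (Op N)) ∧ γ a = u ∧ γ b = v ∧
    l = pathLength γ a b}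

/-- `(u, φ)` belongs to the realization `Ũ(H) = {(u,φ) : det u = e^{iφ}}` of the
universal cover of the unitary group. -/
def InUCover (N : ℕ) (u : Op N) (φ : ℝ) : Prop :=
  u ∈ unitary (Op N) ∧
    LinearMap.det (u : Hsp N →ₗ[ℂ] Hsp N) = Complex.exp (φ * Complex.I)

/-- Geodesic distance on the universal cover `Ũ(H)`: the infimum of the lengths
`∫ ‖γ'(t)‖ dt` over piecewise C¹ curves `t ↦ (γ t, f t)` in `Ũ(H)` joining
`(u, φ)` to `(v, ψ)`. -/
def ucoverDist (N : ℕ) (u : Op N) (φ : ℝ) (v : Op N) (ψ : ℝ) : ℝ :=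
  sInf {l | ∃ (a b : ℝ) (γ : ℝ → Op N) (f : ℝ → ℝ), a ≤ b ∧
    PiecewiseC1On (fun t => (γ t, f t)) a b ∧
    (∀ t ∈ Set.Icc a b, InUCover N (γ t) (f t)) ∧
    γ a = u ∧ f a = φ ∧ γ b = v ∧ f b = ψ ∧
    l = pathLength γ a b}

/-- The multiset of eigenvalues (with multiplicity) of an endomorphism, i.e. the
roots of its characteristic polynomial. -/
def eigenvalueMultiset (N : ℕ) (w : Op N) : Multiset ℂ :=
  (LinearMap.charpoly (w : Hsp N →ₗ[ℂ] Hsp N)).roots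

/-- `θ ∈ R`: `(e^{iθ_j})_j` is the family of eigenvalues of `w` (with multiplicity)
and `∑ θ_j = c`. -/
def InRSet (N : ℕ) (w : Op N) (c : ℝ) (θ : Fin N → ℝ) : Prop :=
  Multiset.map (fun j => Complex.exp ((θ j : ℂ) * Complex.I)) Finset.univ.val
      = eigenvalueMultiset N w ∧ ∑ j, θ j = c

/-- `m = min { max_j |θ_j| : θ ∈ R }`. -/
def mval (N : ℕ) (w : Op N) (c : ℝ) : ℝ :=
  sInf {x | ∃ θ : Fin N → ℝ, InRSet N w c θ ∧ x = ⨆ j, |θ j|}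

end

open Set Filter Topology MeasureTheory

lemma aux_abs_arg {z : ℂ} (hz : ‖z‖ = 1) : |Complex.arg z| = Real.arccos z.re := by
  have h0 : z ≠ 0 := by rintro rfl; simp at hz
  have := Complex.cos_arg h0
  rw [hz, div_one] at this
  rw [← this, ← Real.cos_abs, Real.arccos_cos (abs_nonneg _) (Complex.abs_arg_le_pi z)]

lemma aux_mem {N : ℕ} (w : Op N) (z : ℂ) :
    z ∈ eigenvalueMultiset N w ↔ Module.End.HasEigenvalue (w : Hsp N →ₗ[ℂ] Hsp N) z := by
  unfold eigenvalueMultiset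
  rw [Module.End.hasEigenvalue_iff_isRoot_charpoly, Polynomial.mem_roots]
  exact (LinearMap.charpoly_monic _).ne_zero

lemma aux_spec {N : ℕ} (w : Op N) (z : ℂ) :
    z ∈ spectrum ℂ w ↔ z ∈ eigenvalueMultiset N w := by
  rw [aux_mem, Module.End.hasEigenvalue_iff_mem_spectrum, ContinuousLinearMap.spectrum_eq]

lemma aux_exists_log {N : ℕ} (w : unitary (Op N)) (c : ℝ) (hc : 0 ≤ c)
    (h : ∀ z ∈ spectrum ℂ (w : Op N), |Complex.arg z| ≤ c) :
    ∃ A : selfAdjoint (Op N), ‖(A : Op N)‖ ≤ c ∧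
      NormedSpace.exp (Complex.I • (A : Op N)) = w := by
  refine ⟨Unitary.argSelfAdjoint w, ?_, ?_⟩
  · exact norm_cfc_le hc fun y hy ↦ by simpa using h y hy
  · have hfin : (spectrum ℂ (w : Op N)).Finite := by
      refine (Multiset.finite_toSet (eigenvalueMultiset N (w : Op N))).subset ?_
      intro z hz
      exact (aux_spec _ _).1 hz
    have hcont : ContinuousOn Complex.arg (spectrum ℂ (w : Op N)) := hfin.continuousOn _
    rw [Unitary.argSelfAdjoint_coe, ← CFC.exp_eq_normedSpace_exp (𝕜 := ℂ),
      ← cfc_comp_smul .., ← cfc_comp' ..]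
    conv_rhs => rw [← cfc_id' ℂ (w : Op N)]
    refine cfc_congr fun y hy ↦ ?_
    have hy₁ : ‖y‖ = 1 := spectrum.norm_eq_one_of_unitary w.2 hy
    have : Complex.I * y.arg = Complex.log y :=
      Complex.ext (by simp [Complex.log_re, hy₁]) (by simp [Complex.log_im])
    have hy0 : y ≠ 0 := by rintro rfl; simp at hy₁
    simpa [← Complex.exp_eq_exp_ℂ, this] using Complex.exp_log hy0

lemma aux_upper {N : ℕ} (u v : unitary (Op N)) (A : selfAdjoint (Op N))
    (hA : NormedSpace.exp (Complex.I • (A : Op N)) = (↑(u⁻¹ * v) : Op N)) :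
    ∃ (a b : ℝ) (γ : ℝ → Op N), a ≤ b ∧ PiecewiseC1On γ a b ∧
    (∀ t ∈ Set.Icc a b, γ t ∈ unitary (Op N)) ∧ γ a = u ∧ γ b = v ∧
    ‖(A : Op N)‖ = pathLength γ a b := by
  have hU : ∀ t : ℝ, NormedSpace.exp (t • (Complex.I • (A : Op N))) ∈ unitary (Op N) := by
    intro t
    have := (selfAdjoint.expUnitary
      (⟨(t : ℂ) • (A : Op N), IsSelfAdjoint.smul (Complex.conj_ofReal t) A.2⟩ :
        selfAdjoint (Op N))).2
    rw [selfAdjoint.expUnitary_coe] at this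
    have e : t • (Complex.I • (A : Op N)) = Complex.I • ((t : ℂ) • (A : Op N)) := by
      rw [smul_comm Complex.I]
      rfl
    rw [e]
    exact this
  have hd : ∀ t : ℝ, HasDerivAt
      (fun t : ℝ => (u : Op N) * NormedSpace.exp (t • (Complex.I • (A : Op N))))
      ((u : Op N) * (NormedSpace.exp (t • (Complex.I • (A : Op N))) * (Complex.I • (A : Op N)))) t :=
    fun t => (hasDerivAt_exp_smul_const (Complex.I • (A : Op N)) t).const_mul _
  refine ⟨0, 1, fun t => (u : Op N) * NormedSpace.exp (t • (Complex.I • (A : Op N))),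
    zero_le_one, ?_, ?_, ?_, ?_, ?_⟩
  · refine ⟨1, fun i => i, by simp, by simp, by simp, ?_⟩
    intro i _
    apply ContDiff.contDiffOn
    rw [contDiff_one_iff_deriv]
    refine ⟨fun t => (hd t).differentiableAt, ?_⟩
    rw [show deriv _ = _ from funext fun t => (hd t).deriv]
    have : Continuous fun t : ℝ => NormedSpace.exp (t • (Complex.I • (A : Op N))) :=
      continuous_iff_continuousAt.2 fun t => 
        (hasDerivAt_exp_smul_const (Complex.I • (A : Op N)) t).continuousAt
    fun_prop
  · intro t _
    exact mul_mem u.2 (hU t)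
  · change (u : Op N) * NormedSpace.exp ((0 : ℝ) • (Complex.I • (A : Op N))) = u
    have e : (0 : ℝ) • (Complex.I • (A : Op N)) = 0 := by
      ext x; simp
    rw [e, NormedSpace.exp_zero, mul_one]
  · simp only [one_smul, hA]
    rw [← Submonoid.coe_mul]
    simp
  · unfold pathLength
    have : ∀ t : ℝ, ‖deriv (fun t : ℝ => (u : Op N) *
        NormedSpace.exp (t • (Complex.I • (A : Op N)))) t‖ = ‖(A : Op N)‖ := by
      intro t
      rw [(hd t).deriv, CStarRing.norm_coe_unitary_mul, CStarRing.norm_mem_unitary_mul _ (hU t),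
        norm_smul]
      simp
    simp [this]

lemma aux_ineq {E : Type*} [NormedAddCommGroup E] [InnerProductSpace ℂ E] (p y y' : E)
    (hp : ‖p‖ = 1) (hy : ‖y‖ = 1) (h : (inner ℂ y y').re = 0) :
    |(inner ℂ p y').re| ≤ Real.sqrt (1 - (inner ℂ p y).re ^ 2) * ‖y'‖ := by
  set f := (inner ℂ p y).re with hf
  have h1 : (inner ℂ p y').re = (inner ℂ (p - (f : ℂ) • y) y').re := by
    rw [inner_sub_left, inner_smul_left]
    simp [h]
  have h2 : ‖p - (f : ℂ) • y‖ ^ 2 = 1 - f ^ 2 := by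
    rw [@norm_sub_sq ℂ, inner_smul_right, norm_smul, hp, hy]
    simp [← hf]
    ring
  rw [h1, ← h2, Real.sqrt_sq (norm_nonneg _)]
  exact (Complex.abs_re_le_norm _).trans (norm_inner_le_norm _ _)

/-- One C¹ piece. -/
lemma aux_piece {N : ℕ} (γ : ℝ → Op N) (a b : ℝ) (hab : a ≤ b)
    (hC : ContDiffOn ℝ 1 γ (Icc a b)) (hU : ∀ t ∈ Icc a b, γ t ∈ unitary (Op N))
    (p x : Hsp N) (hp : ‖p‖ = 1) (hx : ‖x‖ = 1) (c : ℝ) (hc0 : 0 ≤ c) (hc1 : c < 1) :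
    IntervalIntegrable (fun t => ‖deriv γ t‖) volume a b ∧
    Real.arccos (c * (inner ℂ p (γ b x)).re) - Real.arccos (c * (inner ℂ p (γ a x)).re)
      ≤ ∫ t in a..b, ‖deriv γ t‖ := by
  obtain rfl | hlt := hab.eq_or_lt
  · simp
  have hint : IntegrableOn (fun t => ‖deriv γ t‖) (Icc a b) := by
    have h1 : ContinuousOn (derivWithin γ (Icc a b)) (Icc a b) :=
      hC.continuousOn_derivWithin (uniqueDiffOn_Icc hlt) le_rfl
    have h2 : IntegrableOn (fun t => ‖derivWithin γ (Icc a b) t‖) (Icc a b) :=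
      h1.norm.integrableOn_Icc
    rw [integrableOn_Icc_iff_integrableOn_Ioo] at h2 ⊢
    refine h2.congr_fun ?_ measurableSet_Ioo
    intro t ht
    simp only
    rw [derivWithin_of_mem_nhds (Icc_mem_nhds ht.1 ht.2)]
  refine ⟨(intervalIntegrable_iff_integrableOn_Icc_of_le hab).2 hint, ?_⟩
  have hyn : ∀ t ∈ Icc a b, ‖γ t x‖ = 1 := by
    intro t ht
    rw [← hx]
    exact ContinuousLinearMap.norm_map_of_mem_unitary (hU t ht) x
  have hcont : ContinuousOn (fun t => γ t x) (Icc a b) :=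
    hC.continuousOn.clm_apply continuousOn_const
  have hder : ∀ t ∈ Ioo a b, HasDerivAt (fun t => γ t x) (deriv γ t x) t := by
    intro t ht
    have h1 : DifferentiableAt ℝ γ t :=
      (hC.differentiableOn one_ne_zero t (Ioo_subset_Icc_self ht)).differentiableAt
        (Icc_mem_nhds ht.1 ht.2)
    exact (((ContinuousLinearMap.apply ℂ (Hsp N) x).restrictScalars ℝ).hasFDerivAt).comp_hasDerivAt
      t h1.hasDerivAt
  have hfle : ∀ t ∈ Icc a b, |(inner ℂ p (γ t x)).re| ≤ 1 := by
    intro t ht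
    refine (Complex.abs_re_le_norm _).trans ((norm_inner_le_norm _ _).trans ?_)
    rw [hp, hyn t ht, one_mul]
  have hfd : ∀ t ∈ Ioo a b, HasDerivAt (fun t => (inner ℂ p (γ t x)).re)
      (inner ℂ p (deriv γ t x)).re t := by
    intro t ht
    have := (hasDerivAt_const t p).inner ℂ (hder t ht)
    rw [inner_zero_left, add_zero] at this
    exact Complex.reCLM.hasFDerivAt.comp_hasDerivAt t this
  refine intervalIntegral.sub_le_integral_of_hasDeriv_right_of_le
    (g := fun t => Real.arccos (c * (inner ℂ p (γ t x)).re))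
    (g' := fun t => -(1 / √(1 - (c * (inner ℂ p (γ t x)).re) ^ 2)) *
      (c * (inner ℂ p (deriv γ t x)).re)) hab ?_ ?_ hint ?_
  · refine Real.continuous_arccos.comp_continuousOn (continuousOn_const.mul ?_)
    exact Complex.continuous_re.comp_continuousOn (continuousOn_const.inner hcont)
  · intro t ht
    have hle := abs_le.1 (hfle t (Ioo_subset_Icc_self ht))
    refine HasDerivAt.hasDerivWithinAt ?_
    have e1 : c * (inner ℂ p (γ t x)).re ≠ -1 := by nlinarith
    have e2 : c * (inner ℂ p (γ t x)).re ≠ 1 := by nlinarith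
    exact HasDerivAt.comp (h₂ := Real.arccos) t (Real.hasDerivAt_arccos e1 e2)
      ((hfd t ht).const_mul c)
  · intro t ht
    have hle := hfle t (Ioo_subset_Icc_self ht)
    have horth : (inner ℂ (γ t x) (deriv γ t x)).re = 0 := by
      have h1 := Complex.reCLM.hasFDerivAt.comp_hasDerivAt t ((hder t ht).inner ℂ (hder t ht))
      have h2 : (Complex.reCLM ∘ fun t => inner ℂ (γ t x) (γ t x)) =ᶠ[𝓝 t] fun _ => (1 : ℝ) := by
        filter_upwards [Icc_mem_nhds ht.1 ht.2] with s hs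
        have := inner_self_eq_norm_sq (𝕜 := ℂ) (γ s x)
        rw [hyn s hs] at this
        simpa using this
      have h3 := h1.unique ((hasDerivAt_const t (1 : ℝ)).congr_of_eventuallyEq h2)
      have h4 : (inner ℂ (deriv γ t x) (γ t x)).re = (inner ℂ (γ t x) (deriv γ t x)).re :=
        inner_re_symm (𝕜 := ℂ) _ _
      simp only [Complex.reCLM_apply, Complex.add_re, h4] at h3
      linarith
    have hb := aux_ineq p (γ t x) (deriv γ t x) hp (hyn t (Ioo_subset_Icc_self ht)) horth
    have hop : ‖deriv γ t x‖ ≤ ‖deriv γ t‖ := by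
      simpa [hx] using (deriv γ t).le_opNorm x
    generalize (inner ℂ p (γ t x)).re = f at *
    generalize (inner ℂ p (deriv γ t x)).re = f' at *
    have hf2 : f ^ 2 ≤ 1 := by rw [← sq_abs]; nlinarith [abs_nonneg f]
    have hpos : 0 < 1 - (c * f) ^ 2 := by nlinarith [sq_nonneg f, sq_nonneg c]
    have hS : 0 < √(1 - (c * f) ^ 2) := Real.sqrt_pos.2 hpos
    have hs : √(1 - f ^ 2) ≤ √(1 - (c * f) ^ 2) :=
      Real.sqrt_le_sqrt (by
        have hc2 : c ^ 2 ≤ 1 := by nlinarith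
        rw [mul_pow]
        nlinarith [sq_nonneg f])
    have key : -(c * f') ≤ √(1 - (c * f) ^ 2) * ‖deriv γ t‖ := by
      calc -(c * f') ≤ |c * f'| := neg_le_abs _
        _ = c * |f'| := by rw [abs_mul, abs_of_nonneg hc0]
        _ ≤ 1 * |f'| := by gcongr
        _ = |f'| := one_mul _
        _ ≤ _ := hb
        _ ≤ _ := by gcongr
    have : -(1 / √(1 - (c * f) ^ 2)) * (c * f') = -(c * f') / √(1 - (c * f) ^ 2) := by
      field_simp
    rw [this, div_le_iff₀ hS]
    linarith

lemma aux_path {N : ℕ} (γ : ℝ → Op N) (a b : ℝ)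
    (hC : PiecewiseC1On γ a b) (hU : ∀ t ∈ Icc a b, γ t ∈ unitary (Op N))
    (p x : Hsp N) (hp : ‖p‖ = 1) (hx : ‖x‖ = 1) (c : ℝ) (hc0 : 0 ≤ c) (hc1 : c < 1) :
    Real.arccos (c * (inner ℂ p (γ b x)).re) - Real.arccos (c * (inner ℂ p (γ a x)).re)
      ≤ pathLength γ a b := by
  obtain ⟨n, τ, rfl, rfl, hmono, hpc⟩ := hC
  have hle : ∀ i j, i ≤ j → j ≤ n → τ i ≤ τ j := by
    intro i j hij
    induction j, hij using Nat.le_induction with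
    | base => intro _; exact le_rfl
    | succ k hk ih => intro h; exact (ih (by omega)).trans (hmono k (by omega))
  have main : ∀ i ≤ n, IntervalIntegrable (fun t => ‖deriv γ t‖) volume (τ 0) (τ i) ∧
      Real.arccos (c * (inner ℂ p (γ (τ i) x)).re) - Real.arccos (c * (inner ℂ p (γ (τ 0) x)).re)
      ≤ ∫ t in (τ 0)..(τ i), ‖deriv γ t‖ := by
    intro i
    induction i with
    | zero => intro _; simp
    | succ k ih =>
      intro h
      obtain ⟨i1, h1⟩ := ih (by omega)
      obtain ⟨i2, h2⟩ := aux_piece γ (τ k) (τ (k+1)) (hmono k (by omega)) (hpc k (by omega))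
        (fun t ht => hU t ⟨(hle 0 k (by omega) (by omega)).trans ht.1,
          ht.2.trans (hle (k+1) n h le_rfl)⟩) p x hp hx c hc0 hc1
      refine ⟨i1.trans i2, ?_⟩
      rw [← intervalIntegral.integral_add_adjacent_intervals i1 i2]
      linarith
  exact (main n le_rfl).2

lemma aux_lower {N : ℕ} (u v : unitary (Op N)) (z : ℂ)
    (hz : z ∈ eigenvalueMultiset N ↑(u⁻¹ * v)) (γ : ℝ → Op N) (a b : ℝ)
    (hC : PiecewiseC1On γ a b) (hU : ∀ t ∈ Icc a b, γ t ∈ unitary (Op N))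
    (ha : γ a = u) (hb : γ b = v) : |Complex.arg z| ≤ pathLength γ a b := by
  have hz1 : ‖z‖ = 1 := spectrum.norm_eq_one_of_unitary (u⁻¹ * v).2 ((aux_spec _ _).2 hz)
  rw [aux_abs_arg hz1]
  obtain ⟨x₀, hx₀⟩ := ((aux_mem _ _).1 hz).exists_hasEigenvector
  obtain ⟨x, hx, hxe⟩ : ∃ x : Hsp N, ‖x‖ = 1 ∧ (↑(u⁻¹ * v) : Op N) x = z • x := by
    refine ⟨((‖x₀‖⁻¹ : ℝ) : ℂ) • x₀, ?_, ?_⟩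
    · have := norm_ne_zero_iff.2 hx₀.2
      rw [norm_smul]
      simp [this]
    · have h := hx₀.apply_eq_smul
      simp only [ContinuousLinearMap.coe_coe] at h
      rw [map_smul, h, smul_comm]
  have hp : ‖(u : Op N) x‖ = 1 := by
    rw [← hx]; exact ContinuousLinearMap.norm_map_of_mem_unitary u.2 x
  have hv : (v : Op N) x = z • (u : Op N) x := by
    rw [← map_smul, ← hxe, ← mul_apply_eq_comp, ← Submonoid.coe_mul]
    simp
  have hself : inner ℂ ((u : Op N) x) ((u : Op N) x) = (1 : ℂ) := by
    rw [inner_self_eq_norm_sq_to_K, hp]; simp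
  have key : ∀ c ∈ Ico (0 : ℝ) 1, Real.arccos (c * z.re) - Real.arccos (c * 1)
      ≤ pathLength γ a b := by
    intro c hc
    have := aux_path γ a b hC hU ((u : Op N) x) x hp hx c hc.1 hc.2
    rw [ha, hb, hv, inner_smul_right, hself] at this
    simpa using this
  have hlim : Tendsto (fun c : ℝ => Real.arccos (c * z.re) - Real.arccos (c * 1)) (𝓝[<] 1)
      (𝓝 (Real.arccos (1 * z.re) - Real.arccos (1 * 1))) := by
    apply Tendsto.mono_left _ nhdsWithin_le_nhds
    apply Continuous.tendsto (f := fun c : ℝ => Real.arccos (c * z.re) - Real.arccos (c * 1))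
    exact (Real.continuous_arccos.comp (by fun_prop)).sub (Real.continuous_arccos.comp (by fun_prop))
  have hfin := le_of_tendsto hlim (b := pathLength γ a b) (by
    filter_upwards [Ico_mem_nhdsLT (zero_lt_one' ℝ)] with c hc
    exact key c hc)
  simpa using hfin

/-- For any `u, v ∈ U(H)`, the geodesic distance equals
`max_i |arg λ_i|` where `λ_1, …, λ_N` are the eigenvalues (with multiplicity)
of `u⁻¹ v` and `arg` is the principal argument valued in `(-π, π]`. -/
theorem geoDist_eq_max_abs_arg_eigenvalues (N : ℕ) (hN : 1 ≤ N)
    (u v : unitary (Op N)) (lam : Fin N → ℂ)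
    (hlam : eigenvalueMultiset N ↑(u⁻¹ * v) = Multiset.map lam Finset.univ.val) :
    geoDist N ↑u ↑v = ⨆ i, |Complex.arg (lam i)| := by
  have : Nonempty (Fin N) := ⟨⟨0, hN⟩⟩
  have hmem : ∀ z, z ∈ eigenvalueMultiset N ↑(u⁻¹ * v) ↔ ∃ i, lam i = z := by
    intro z; rw [hlam]; simp
  have hbdd : BddAbove (Set.range fun i => |Complex.arg (lam i)|) := (Set.finite_range _).bddAbove
  have hlow : ∀ l ∈ {l | ∃ (a b : ℝ) (γ : ℝ → Op N), a ≤ b ∧ PiecewiseC1On γ a b ∧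
    (∀ t ∈ Set.Icc a b, γ t ∈ unitary (Op N)) ∧ γ a = u ∧ γ b = v ∧
    l = pathLength γ a b}, (⨆ i, |Complex.arg (lam i)|) ≤ l := by
    rintro l ⟨a, b, γ, hab, hC, hU, ha, hb, rfl⟩
    refine ciSup_le fun i => ?_
    exact aux_lower u v _ ((hmem _).2 ⟨i, rfl⟩) γ a b hC hU ha hb
  obtain ⟨A, hA, hexp⟩ := aux_exists_log (u⁻¹ * v) (⨆ i, |Complex.arg (lam i)|)
    (Real.iSup_nonneg fun i => abs_nonneg _) (by
      intro z hz
      obtain ⟨i, rfl⟩ := (hmem z).1 ((aux_spec _ _).1 hz)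
      exact le_ciSup hbdd i)
  have hup := aux_upper u v A hexp
  unfold geoDist
  apply le_antisymm
  · exact (csInf_le ⟨_, hlow⟩ hup).trans hA
  · exact le_csInf ⟨_, hup⟩ hlow
end

section
/- The diameter of U(H) for the geodesic distance d equals π: one has d(u,v) ≤ π for all u, v ∈ U(H), and there exist u, v ∈ U(H) with d(u,v) = π (for instance u and −u). -/
lemma aux_spec_finite (N : ℕ) (w : Op N) : (spectrum ℂ w).Finite := by
  have h := Module.End.finite_spectrum (K := ℂ) (w : Hsp N →ₗ[ℂ] Hsp N)
  have := AlgEquiv.spectrum_eq (Module.End.toContinuousLinearMap (𝕜 := ℂ) (Hsp N))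
    (w : Hsp N →ₗ[ℂ] Hsp N)
  rw [← this] at h
  exact h

open Complex NormedSpace selfAdjoint Unitary in
lemma aux_exp_arg (N : ℕ) (u : unitary (Op N)) : expUnitary (argSelfAdjoint u) = u := by
  ext1
  have : ContinuousOn arg (spectrum ℂ (u : Op N)) := (aux_spec_finite N u).continuousOn _
  rw [expUnitary_coe, argSelfAdjoint_coe, ← CFC.exp_eq_normedSpace_exp (𝕜 := ℂ),
    ← cfc_comp_smul .., ← cfc_comp' ..]
  conv_rhs => rw [← cfc_id' ℂ (u : Op N)]
  refine cfc_congr fun y hy ↦ ?_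
  have hy₁ : ‖y‖ = 1 := spectrum.norm_eq_one_of_unitary u.2 hy
  have : I * y.arg = log y :=
    Complex.ext (by simp [log_re, hy₁]) (by simp [log_im])
  simpa [← exp_eq_exp_ℂ, this] using exp_log (by aesop)

open NormedSpace selfAdjoint in
lemma aux_exp_mem {A : Type*} [CStarAlgebra A] (a : selfAdjoint A) (t : ℝ) :
    exp (t • (Complex.I • (a : A))) ∈ unitary A := by
  have : exp (t • (Complex.I • (a : A))) = (expUnitary (t • a) : A) := by
    rw [expUnitary_coe]
    congr 1
    rw [smul_comm]
    rfl
  rw [this]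
  exact (expUnitary (t • a)).2

open NormedSpace selfAdjoint Unitary in
lemma aux_exists_path (N : ℕ) (u v : unitary (Op N)) :
    ∃ γ : ℝ → Op N, PiecewiseC1On γ 0 1 ∧ (∀ t ∈ Set.Icc (0:ℝ) 1, γ t ∈ unitary (Op N)) ∧
      γ 0 = u ∧ γ 1 = v ∧ pathLength γ 0 1 ≤ Real.pi := by
  set A := argSelfAdjoint (u⁻¹ * v) with hA
  have hexp : expUnitary A = u⁻¹ * v := aux_exp_arg N _
  have hn : ‖(A : Op N)‖ ≤ Real.pi := Unitary.norm_argSelfAdjoint_le_pi (u⁻¹ * v)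
  set B : Op N := Complex.I • (A : Op N) with hB
  have hBn : ‖B‖ ≤ Real.pi := by
    rw [hB, norm_smul]; simpa using hn
  have hmem : ∀ t : ℝ, exp (t • B) ∈ unitary (Op N) := fun t => aux_exp_mem A t
  have hone : exp B = ((u⁻¹ * v : unitary (Op N)) : Op N) := by
    rw [← hexp, expUnitary_coe]
  have hd : ∀ t : ℝ, HasDerivAt (fun t : ℝ => (u : Op N) * exp (t • B))
      ((u : Op N) * (exp (t • B) * B)) t := fun t =>
    (hasDerivAt_exp_smul_const (𝕂 := ℝ) B t).const_mul _
  have hderiv : deriv (fun t : ℝ => (u : Op N) * exp (t • B)) =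
      fun t => ((u : Op N) * (exp (t • B) * B)) := funext fun t => (hd t).deriv
  have hcont : Continuous fun t : ℝ => ((u : Op N) * (exp (t • B) * B)) := by
    have : Continuous fun t : ℝ => exp (t • B) := continuous_iff_continuousAt.2 fun t =>
      (hasDerivAt_exp_smul_const (𝕂 := ℝ) B t).continuousAt
    fun_prop
  have hC : ContDiff ℝ 1 (fun t : ℝ => (u : Op N) * exp (t • B)) := by
    rw [contDiff_one_iff_deriv, hderiv]
    exact ⟨fun t => (hd t).differentiableAt, hcont⟩
  refine ⟨fun t => (u : Op N) * exp (t • B), ?_, ?_, ?_, ?_, ?_⟩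
  · refine ⟨1, fun i => i, by simp, by simp, fun i _ => by simp, fun i _ => hC.contDiffOn⟩
  · intro t _
    exact mul_mem u.2 (hmem t)
  · have h0 : (0 : ℝ) • B = 0 := zero_smul ℝ B
    change (u : Op N) * exp ((0 : ℝ) • B) = u
    rw [h0, exp_zero, mul_one]
  · simp only [one_smul, hone]
    have : u * (u⁻¹ * v) = v := by group
    exact congrArg Subtype.val this
  · unfold pathLength
    rw [hderiv]
    have : ∫ t in (0:ℝ)..1, ‖(u : Op N) * (exp (t • B) * B)‖ ≤ ∫ t in (0:ℝ)..1, Real.pi := by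
      refine intervalIntegral.integral_mono_on zero_le_one
        (hcont.norm.intervalIntegrable _ _) (by simp) fun t _ => ?_
      rw [CStarRing.norm_coe_unitary_mul, CStarRing.norm_mem_unitary_mul _ (hmem t)]
      exact hBn
    simpa using this

lemma aux_integrable {E : Type*} [NormedAddCommGroup E] [NormedSpace ℝ E]
    (γ : ℝ → E) (p q : ℝ) (h : ContDiffOn ℝ 1 γ (Set.Icc p q)) :
    MeasureTheory.IntegrableOn (fun t => ‖deriv γ t‖) (Set.Icc p q) := by
  rcases lt_or_ge p q with hpq | hpq
  · have hc : ContinuousOn (fun t => ‖derivWithin γ (Set.Icc p q) t‖) (Set.Icc p q) :=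
      (h.continuousOn_derivWithin (uniqueDiffOn_Icc hpq) le_rfl).norm
    have hi := hc.integrableOn_Icc (μ := MeasureTheory.volume)
    rw [integrableOn_Icc_iff_integrableOn_Ioo] at hi ⊢
    refine hi.congr_fun (fun t ht => ?_) measurableSet_Ioo
    simp only
    rw [derivWithin_of_mem_nhds (Icc_mem_nhds ht.1 ht.2)]
  · have : MeasureTheory.volume (Set.Icc p q) = 0 := by simp [hpq]
    exact MeasureTheory.IntegrableOn.of_measure_zero this

lemma aux_piece_s2 (N : ℕ) (x : Hsp N) (y : Hsp N) (hx : ‖x‖ = 1) (hy : ‖y‖ = 1)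
    (γ : ℝ → Op N) (p q : ℝ) (hpq : p ≤ q) (h : ContDiffOn ℝ 1 γ (Set.Icc p q))
    (hu : ∀ t ∈ Set.Icc p q, γ t ∈ unitary (Op N)) (r : ℝ) (hr0 : 0 < r) (hr1 : r < 1) :
    (-Real.arcsin (r * (inner ℂ y (γ q x)).re)) - (-Real.arcsin (r * (inner ℂ y (γ p x)).re))
      ≤ ∫ t in p..q, ‖deriv γ t‖ := by
  have hnorm : ∀ t ∈ Set.Icc p q, ‖γ t x‖ = 1 := by
    intro t ht
    rw [← hx]
    exact ContinuousLinearMap.norm_map_of_mem_unitary (hu t ht) x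
  have hcγ : ContinuousOn (fun t => γ t x) (Set.Icc p q) := h.continuousOn.clm_apply continuousOn_const
  refine intervalIntegral.sub_le_integral_of_hasDeriv_right_of_le
    (g := fun t => -Real.arcsin (r * (inner ℂ y (γ t x)).re))
    (g' := fun t => -(1 / √(1 - (r * (inner ℂ y (γ t x)).re) ^ 2) *
      (r * (inner ℂ y (deriv γ t x)).re))) hpq ?_ ?_ (aux_integrable γ p q h) ?_
  · have : ContinuousOn (fun t => (inner ℂ y (γ t x)).re) (Set.Icc p q) :=
      Complex.continuous_re.comp_continuousOn (continuousOn_const.inner hcγ)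
    exact (Real.continuous_arcsin.comp_continuousOn (continuousOn_const.mul this)).neg
  all_goals
    intro t ht
    have ht' := Set.Ioo_subset_Icc_self ht
    have hnh : Set.Icc p q ∈ nhds t := Icc_mem_nhds ht.1 ht.2
    have hdγ : HasDerivAt γ (deriv γ t) t :=
      ((h.differentiableOn one_ne_zero t ht').differentiableAt hnh).hasDerivAt
    have hdc : HasDerivAt (fun t => γ t x) (deriv γ t x) t := by
      have := (((ContinuousLinearMap.apply ℂ (Hsp N) x).restrictScalars ℝ).hasFDerivAt
        (x := γ t)).comp_hasDerivAt t hdγ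
      exact this
    have hdf : HasDerivAt (fun t => (inner ℂ y (γ t x)).re) (inner ℂ y (deriv γ t x)).re t := by
      have := (((innerSL ℂ y).restrictScalars ℝ).hasFDerivAt (x := γ t x)).comp_hasDerivAt t hdc
      exact (Complex.reCLM.hasFDerivAt (x := inner ℂ y (γ t x))).comp_hasDerivAt t this
    have hf1 : |(inner ℂ y (γ t x)).re| ≤ 1 := by
      refine (Complex.abs_re_le_norm _).trans ((norm_inner_le_norm _ _).trans ?_)
      rw [hy, hnorm t ht', one_mul]
    set f := (inner ℂ y (γ t x)).re with hf
    set D := deriv γ t x with hD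
    have hff : f ^ 2 ≤ 1 := by rw [← sq_abs]; exact pow_le_one₀ (abs_nonneg _) hf1
    have hlt : (r * f) ^ 2 < 1 := by
      rw [mul_pow]; nlinarith [sq_nonneg f]
  · have hb := abs_lt.1 ((sq_lt_one_iff_abs_lt_one _).1 hlt)
    exact (((Real.hasDerivAt_arcsin hb.1.ne' hb.2.ne).comp t (hdf.const_mul r)).neg).hasDerivWithinAt
  · have horth : (inner ℂ (γ t x) D).re = 0 := by
      have h1 := hdc.inner ℂ hdc
      have h2 : HasDerivAt (fun t => inner ℂ (γ t x) (γ t x)) 0 t := by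
        refine (hasDerivAt_const t (1:ℂ)).congr_of_eventuallyEq ?_
        filter_upwards [hnh] with s hs
        rw [inner_self_eq_norm_sq_to_K, hnorm s hs]; simp
      have h3 := congrArg Complex.re (h1.unique h2)
      have h4 : (inner ℂ D (γ t x)).re = (inner ℂ (γ t x) D).re := inner_re_symm (𝕜 := ℂ) _ _
      rw [Complex.add_re, h4, Complex.zero_re] at h3
      linarith
    have hkey : |(inner ℂ y D).re| ≤ √(1 - f ^ 2) * ‖D‖ := by
      have e1 : (inner ℂ y D).re = (inner ℂ (y - (f : ℂ) • γ t x) D).re := by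
        rw [inner_sub_left, inner_smul_left]
        simp [horth]
      have e2 : ‖y - (f : ℂ) • γ t x‖ ^ 2 = 1 - f ^ 2 := by
        rw [norm_sub_sq (𝕜 := ℂ), inner_smul_right, norm_smul, hy, hnorm t ht']
        simp [← hf]
        ring
      rw [e1, ← e2, Real.sqrt_sq (norm_nonneg _)]
      exact (Complex.abs_re_le_norm _).trans (norm_inner_le_norm _ _)
    have hDn : ‖D‖ ≤ ‖deriv γ t‖ := by
      simpa [hx] using (deriv γ t).le_opNorm x
    have hs : 0 < √(1 - (r * f) ^ 2) := Real.sqrt_pos.2 (by linarith)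
    have hss : √(1 - f ^ 2) ≤ √(1 - (r * f) ^ 2) := by
      apply Real.sqrt_le_sqrt
      have hr2 : r ^ 2 ≤ 1 := pow_le_one₀ hr0.le hr1.le
      rw [mul_pow]; nlinarith [mul_le_mul_of_nonneg_right hr2 (sq_nonneg f)]
    refine (neg_le_abs _).trans ?_
    rw [abs_mul, abs_mul, abs_of_pos hr0, abs_of_pos (by positivity : 0 < 1 / √(1 - (r * f) ^ 2)),
      one_div_mul_eq_div, div_le_iff₀ hs]
    calc r * |(inner ℂ y D).re| ≤ 1 * |(inner ℂ y D).re| := by gcongr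
      _ ≤ √(1 - f ^ 2) * ‖D‖ := by rw [one_mul]; exact hkey
      _ ≤ √(1 - (r * f) ^ 2) * ‖deriv γ t‖ := by gcongr
      _ = _ := mul_comm _ _

lemma aux_lower_s2 (N : ℕ) (hN : 1 ≤ N) (u : unitary (Op N)) (γ : ℝ → Op N) (a b : ℝ)
    (h : PiecewiseC1On γ a b) (hu : ∀ t ∈ Set.Icc a b, γ t ∈ unitary (Op N))
    (ha : γ a = u) (hb : γ b = -(u : Op N)) : Real.pi ≤ pathLength γ a b := by
  obtain ⟨n, τ, h0, hn, hmono, hC⟩ := h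
  set x : Hsp N := EuclideanSpace.single (⟨0, hN⟩ : Fin N) (1 : ℂ) with hxdef
  have hx : ‖x‖ = 1 := by simp [hxdef]
  set y : Hsp N := (u : Op N) x with hydef
  have hy : ‖y‖ = 1 := by
    rw [← hx]; exact ContinuousLinearMap.norm_map_of_mem_unitary u.2 x
  have hlow : ∀ i ≤ n, a ≤ τ i := by
    intro i
    induction i with
    | zero => intro _; exact h0.ge
    | succ k ih => intro hk; exact (ih (by omega)).trans (hmono k (by omega))
  have hupp : ∀ j ≤ n, τ (n - j) ≤ b := by
    intro j
    induction j with
    | zero => intro _; exact hn.le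
    | succ k ih =>
      intro hk
      refine le_trans ?_ (ih (by omega))
      have := hmono (n - (k + 1)) (by omega)
      rwa [show n - (k + 1) + 1 = n - k by omega] at this
  have hupp' : ∀ i ≤ n, τ i ≤ b := fun i hi => by
    have := hupp (n - i) (by omega)
    rwa [show n - (n - i) = i by omega] at this
  have main : ∀ r : ℝ, 0 < r → r < 1 → 2 * Real.arcsin r ≤ pathLength γ a b := by
    intro r hr0 hr1
    have hind : ∀ k ≤ n, IntervalIntegrable (fun t => ‖deriv γ t‖) MeasureTheory.volume a (τ k) ∧
        (-Real.arcsin (r * (inner ℂ y (γ (τ k) x)).re)) -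
          (-Real.arcsin (r * (inner ℂ y (γ a x)).re)) ≤ ∫ t in a..(τ k), ‖deriv γ t‖ := by
      intro k
      induction k with
      | zero => intro _; rw [h0]; simp
      | succ k ih =>
        intro hk
        obtain ⟨i1, i2⟩ := ih (by omega)
        have hle := hmono k (by omega)
        have hc := hC k (by omega)
        have j1 : IntervalIntegrable (fun t => ‖deriv γ t‖) MeasureTheory.volume
            (τ k) (τ (k + 1)) := by
          rw [intervalIntegrable_iff_integrableOn_Icc_of_le hle]
          exact aux_integrable γ _ _ hc
        have j2 := aux_piece_s2 N x y hx hy γ _ _ hle hc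
          (fun t ht => hu t ⟨(hlow k (by omega)).trans ht.1, ht.2.trans (hupp' _ hk)⟩) r hr0 hr1
        refine ⟨i1.trans j1, ?_⟩
        rw [← intervalIntegral.integral_add_adjacent_intervals i1 j1]
        linarith
    have := (hind n le_rfl).2
    rw [hn, ha, hb] at this
    have hyy : (inner ℂ y y).re = 1 := by
      rw [inner_self_eq_norm_sq_to_K, hy]; simp
    have hneg : (-(u : Op N)) x = -y := by simp [hydef]
    rw [hneg, ← hydef, inner_neg_right, Complex.neg_re, hyy, mul_neg, Real.arcsin_neg, mul_one] at this
    unfold pathLength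
    linarith
  have hlim : Filter.Tendsto (fun r : ℝ => 2 * Real.arcsin r) (nhdsWithin 1 (Set.Iio 1))
      (nhds (2 * Real.arcsin 1)) :=
    ((continuous_const.mul Real.continuous_arcsin).tendsto 1).mono_left nhdsWithin_le_nhds
  rw [Real.arcsin_one, mul_div_cancel₀ _ two_ne_zero] at hlim
  refine le_of_tendsto hlim ?_
  filter_upwards [Ioo_mem_nhdsLT (zero_lt_one (α := ℝ))] with r hr
  exact main r hr.1 hr.2

/-- the diameter of `U(H)` for the geodesic distance is `π`:
`d(u,v) ≤ π` for all `u, v`, and `d(u, -u) = π` for every unitary `u`. -/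
theorem geoDist_le_pi_and_geoDist_neg_self (N : ℕ) (hN : 1 ≤ N) :
    (∀ u v : unitary (Op N), geoDist N ↑u ↑v ≤ Real.pi) ∧
      (∀ u : unitary (Op N), geoDist N ↑u (-(↑u : Op N)) = Real.pi) := by
  have h1 : ∀ u v : unitary (Op N), geoDist N ↑u ↑v ≤ Real.pi := by
    intro u v
    obtain ⟨γ, hγ, hu, ha, hb, hl⟩ := aux_exists_path N u v
    refine le_trans (csInf_le ⟨0, ?_⟩ ⟨0, 1, γ, zero_le_one, hγ, hu, ha, hb, rfl⟩) hl
    rintro l ⟨a, b, γ, hab, -, -, -, -, rfl⟩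
    exact intervalIntegral.integral_nonneg hab fun t _ => norm_nonneg _
  refine ⟨h1, fun u => le_antisymm ?_ ?_⟩
  · exact h1 u (-u)
  · obtain ⟨γ, hγ, hu, ha, hb, hl⟩ := aux_exists_path N u (-u)
    refine le_csInf ⟨_, 0, 1, γ, zero_le_one, hγ, hu, ha, hb, rfl⟩ ?_
    rintro l ⟨a, b, γ, hab, h, hu', ha', hb', rfl⟩
    exact aux_lower_s2 N hN u γ a b h hu' ha' hb'
end

section
/- Let v ∈ U(H), let X ∈ H be a unit vector with vX = e^{iθ}X for some θ ∈ (−π, π]. Then for every piecewise C¹ curve γ : [a,b] → U(H) with γ(a) = 1 and γ(b) = v, one has |θ| ≤ L(γ) = ∫_a^b ‖γ'(t)‖ dt. -/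
open Set Filter Topology InnerProductGeometry in
lemma aux_angle_chord {V : Type*} [NormedAddCommGroup V] [InnerProductSpace ℝ V]
    (p q : V) (hp : ‖p‖ = 1) (hq : ‖q‖ = 1) :
    angle p q = 2 * Real.arcsin (‖p - q‖ / 2) := by
  have h0 := angle_nonneg p q
  have h1 := angle_le_pi p q
  have hc : Real.cos (angle p q) = inner ℝ p q := by
    rw [cos_angle, hp, hq]; simp
  have hd : ‖p - q‖ ^ 2 = 2 - 2 * inner ℝ p q := by
    rw [norm_sub_sq_real, hp, hq]; ring
  have hs : Real.sin (angle p q / 2) = ‖p - q‖ / 2 := by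
    have hs0 : 0 ≤ Real.sin (angle p q / 2) :=
      Real.sin_nonneg_of_nonneg_of_le_pi (by linarith) (by linarith [Real.pi_pos])
    have h2 : Real.cos (angle p q) = 1 - 2 * Real.sin (angle p q / 2) ^ 2 := by
      have := Real.cos_two_mul (angle p q / 2)
      rw [Real.cos_sq'] at this
      rw [show 2 * (angle p q / 2) = angle p q by ring] at this
      linarith
    have := norm_nonneg (p - q)
    refine (sq_eq_sq₀ hs0 (by positivity)).1 ?_
    nlinarith
  rw [← hs, Real.arcsin_sin (by linarith) (by linarith)]; ring

open Set Filter Topology InnerProductGeometry in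
lemma aux_piece_s4 {V E : Type*} [NormedAddCommGroup V] [InnerProductSpace ℝ V]
    [NormedAddCommGroup E] [NormedSpace ℝ E] (γ : ℝ → E) (x : ℝ → V) (s t : ℝ) (hst : s ≤ t)
    (hγ : ContDiffOn ℝ 1 γ (Icc s t)) (hx : ∀ u ∈ Icc s t, ‖x u‖ = 1)
    (hxγ : ∀ u ∈ Icc s t, ∀ w ∈ Icc s t, ‖x u - x w‖ ≤ ‖γ u - γ w‖) :
    IntervalIntegrable (fun u => ‖deriv γ u‖) MeasureTheory.volume s t ∧
    angle (x s) (x t) ≤ ∫ u in s..t, ‖deriv γ u‖ := by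
  rcases hst.eq_or_lt with rfl | hlt
  · have := hx s (by simp)
    have hne : x s ≠ 0 := by intro h; simp [h] at this
    simp [angle_self hne]
  have hgc : ContinuousOn (fun u => ‖derivWithin γ (Icc s t) u‖) (Icc s t) :=
    (hγ.continuousOn_derivWithin (uniqueDiffOn_Icc hlt) le_rfl).norm
  set G : ℝ → ℝ := IccExtend hst ((Icc s t).domRestrict (fun u => ‖derivWithin γ (Icc s t) u‖)) with hG
  have hGc : Continuous G := (continuousOn_iff_continuous_domRestrict.1 hgc).Icc_extend'
  have hGeq : ∀ u ∈ Icc s t, G u = ‖derivWithin γ (Icc s t) u‖ := by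
    intro u hu; rw [hG, IccExtend_of_mem _ _ hu]; rfl
  have hGd : ∀ u ∈ Ioo s t, G u = ‖deriv γ u‖ := by
    intro u hu
    rw [hGeq u (Ioo_subset_Icc_self hu), derivWithin_of_mem_nhds (Icc_mem_nhds hu.1 hu.2)]
  constructor
  · refine (hGc.intervalIntegrable s t).congr_uIoo ?_
    rw [uIoo_of_le hst]
    exact hGd
  have hint : ∫ u in s..t, ‖deriv γ u‖ = ∫ u in s..t, G u := by
    refine intervalIntegral.integral_congr_uIoo ?_
    rw [uIoo_of_le hst]
    exact fun u hu => (hGd u hu).symm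
  rw [hint]
  have hxc : ContinuousOn x (Icc s t) := by
    intro u hu
    have h1 := hγ.continuousOn u hu
    rw [ContinuousWithinAt, tendsto_iff_norm_sub_tendsto_zero] at h1 ⊢
    refine squeeze_zero' (Eventually.of_forall fun _ => norm_nonneg _) ?_ h1
    filter_upwards [self_mem_nhdsWithin] with z hz using hxγ z hz u hu
  have hs : s ∈ Icc s t := left_mem_Icc.2 hst
  have hne : ∀ u ∈ Icc s t, x u ≠ 0 := by
    intro u hu h; have := hx u hu; simp [h] at this
  have hfc : ContinuousOn (fun u => angle (x s) (x u)) (Icc s t) := by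
    have : ContinuousOn (fun u => 2 * Real.arcsin (‖x s - x u‖ / 2)) (Icc s t) :=
      continuousOn_const.mul (Real.continuous_arcsin.comp_continuousOn
        ((continuousOn_const.sub hxc).norm.div_const 2))
    exact this.congr fun u hu => aux_angle_chord _ _ (hx s hs) (hx u hu)
  have key := image_le_of_liminf_slope_right_le_deriv_boundary
    (f := fun u => angle (x s) (x u)) (a := s) (b := t) (B := fun w => ∫ u in s..w, G u)
    (B' := G) hfc (by simp [angle_self (hne s hs)])
    (fun w _ => (hGc.integral_hasStrictDerivAt s w).hasDerivAt.continuousAt.continuousWithinAt)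
    (fun w _ => (hGc.integral_hasStrictDerivAt s w).hasDerivAt.hasDerivWithinAt) ?_
  · exact key (right_mem_Icc.2 hst)
  intro u hu r hr
  have huI : u ∈ Icc s t := Ico_subset_Icc_self hu
  obtain ⟨r', h1, h2⟩ := exists_between hr
  rw [hGeq u huI] at h1
  have hd : HasDerivWithinAt γ (derivWithin γ (Icc s t) u) (Icc s t) u :=
    ((hγ.differentiableOn one_ne_zero) u huI).hasDerivWithinAt
  have hle : 𝓝[>] u ≤ 𝓝[Icc s t] u := by
    refine nhdsWithin_le_of_mem ?_
    filter_upwards [Ioo_mem_nhdsGT hu.2] with z hz using ⟨hu.1.trans hz.1.le, hz.2.le⟩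
  have e1 := hle (hd.limsup_norm_slope_le h1)
  have e2 : ∀ᶠ z in 𝓝[>] u, z ∈ Icc s t := hle self_mem_nhdsWithin
  have hA : HasDerivAt (fun z => 2 * Real.arcsin (r' * (z - u) / 2)) r' u := by
    have ha : HasDerivAt (fun z => r' * (z - u) / 2) (r' / 2) u := by
      simpa using (((hasDerivAt_id u).sub_const u).const_mul r').div_const 2
    have hb : HasDerivAt Real.arcsin 1 (r' * (u - u) / 2) := by
      simpa using Real.hasDerivAt_arcsin (x := 0) (by norm_num) (by norm_num)
    have := (hb.comp u ha).const_mul 2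
    exact this.congr_deriv (by ring)
  have e3 : ∀ᶠ z in 𝓝[>] u, slope (fun z => 2 * Real.arcsin (r' * (z - u) / 2)) u z < r :=
    (hA.hasDerivWithinAt (s := Ioi u)).limsup_slope_le' (by simp) h2
  refine Eventually.frequently ?_
  filter_upwards [e1, e2, e3, self_mem_nhdsWithin] with z z1 z2 z3 z4
  have hz : 0 < z - u := sub_pos.2 z4
  refine lt_of_le_of_lt ?_ z3
  simp only [slope_def_field]
  refine div_le_div_of_nonneg_right ?_ hz.le
  simp only [sub_self, mul_zero, zero_div, Real.arcsin_zero, sub_zero]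
  have t1 := angle_le_angle_add_angle (x s) (x u) (x z)
  rw [aux_angle_chord (x u) (x z) (hx u huI) (hx z z2)] at t1
  have t2 : ‖x u - x z‖ ≤ r' * (z - u) := by
    rw [norm_sub_rev]
    refine (hxγ z z2 u huI).trans ?_
    rw [Real.norm_of_nonneg hz.le, inv_mul_lt_iff₀ hz] at z1
    linarith
  have t3 : Real.arcsin (‖x u - x z‖ / 2) ≤ Real.arcsin (r' * (z - u) / 2) :=
    Real.monotone_arcsin (by linarith)
  linarith

/-- if `v` is unitary, `X` a unit vector with `v X = e^{iθ} X`,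
`θ ∈ (-π, π]`, then every piecewise C¹ curve in `U(H)` from `1` to `v` has
length at least `|θ|`. -/
theorem abs_arg_eigenvalue_le_length (N : ℕ) (hN : 1 ≤ N) (v : unitary (Op N))
    (X : Hsp N) (hX : ‖X‖ = 1) (θ : ℝ) (hθ : θ ∈ Set.Ioc (-Real.pi) Real.pi)
    (hvX : (v : Op N) X = Complex.exp (θ * Complex.I) • X)
    (a b : ℝ) (hab : a ≤ b) (γ : ℝ → Op N) (hγ : PiecewiseC1On γ a b)
    (hunit : ∀ t ∈ Set.Icc a b, γ t ∈ unitary (Op N))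
    (ha : γ a = 1) (hb : γ b = (v : Op N)) :
    |θ| ≤ pathLength γ a b := by
  obtain ⟨n, τ, h0, hn, hmono, hC⟩ := hγ
  have hle : ∀ j, j ≤ n → τ 0 ≤ τ j := by
    intro j
    induction j with
    | zero => intro _; exact le_rfl
    | succ k ih => intro hk; exact (ih (by omega)).trans (hmono k (by omega))
  have hge : ∀ k j, j + k = n → τ j ≤ τ n := by
    intro k
    induction k with
    | zero => intro j hj; simp at hj; rw [hj]
    | succ k ih => intro j hj; exact (hmono j (by omega)).trans (ih (j + 1) (by omega))
  have hmem : ∀ j, j ≤ n → τ j ∈ Set.Icc a b := fun j hj =>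
    ⟨h0 ▸ hle j hj, hn ▸ hge (n - j) j (by omega)⟩
  have hsub : ∀ j, j < n → Set.Icc (τ j) (τ (j + 1)) ⊆ Set.Icc a b := fun j hj =>
    Set.Icc_subset_Icc (hmem j hj.le).1 (hmem (j + 1) hj).2
  have hnorm : ∀ u ∈ Set.Icc a b, ‖γ u X‖ = 1 := by
    intro u hu
    have := ContinuousLinearMap.norm_map_of_mem_unitary (hunit u hu) X
    rw [this, hX]
  have hP : ∀ j, j < n → _ := fun j hj => aux_piece_s4 γ (fun u => γ u X) (τ j) (τ (j + 1))
    (hmono j hj) (hC j hj) (fun u hu => hnorm u (hsub j hj hu)) (fun u _ w _ => by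
      have := (γ u - γ w).le_opNorm X
      rwa [hX, mul_one] at this)
  have hXne : X ≠ 0 := by intro h; simp [h] at hX
  have hI : ∀ j, j ≤ n → IntervalIntegrable (fun u => ‖deriv γ u‖) MeasureTheory.volume (τ 0) (τ j) ∧
      InnerProductGeometry.angle (γ (τ 0) X) (γ (τ j) X) ≤ ∫ u in (τ 0)..(τ j), ‖deriv γ u‖ := by
    intro j
    induction j with
    | zero => intro _; simp [h0, ha, InnerProductGeometry.angle_self hXne]
    | succ k ih =>
      intro hk
      obtain ⟨i1, i2⟩ := ih (by omega)
      obtain ⟨p1, p2⟩ := hP k hk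
      refine ⟨i1.trans p1, ?_⟩
      rw [← intervalIntegral.integral_add_adjacent_intervals i1 p1]
      exact (InnerProductGeometry.angle_le_angle_add_angle _ (γ (τ k) X) _).trans (add_le_add i2 p2)
  have hfin := (hI n le_rfl).2
  rw [h0, hn, ha, hb, hvX] at hfin
  refine le_trans (le_of_eq ?_) hfin
  have hin : inner ℝ X (Complex.exp (θ * Complex.I) • X) = Real.cos θ := by
    have q1 := norm_sub_sq_real X (Complex.exp (θ * Complex.I) • X)
    have q2 := norm_sub_sq (𝕜 := ℂ) X (Complex.exp (θ * Complex.I) • X)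
    have q3 : inner ℝ X (Complex.exp (θ * Complex.I) • X) =
        RCLike.re (inner ℂ X (Complex.exp (θ * Complex.I) • X)) := by linarith
    rw [q3]
    rw [inner_smul_right, inner_self_eq_norm_sq_to_K, hX]
    simp [Complex.exp_ofReal_mul_I_re]
  show |θ| = InnerProductGeometry.angle X (Complex.exp (θ * Complex.I) • X)
  rw [InnerProductGeometry.angle, hin, norm_smul, Complex.norm_exp_ofReal_mul_I, hX]
  rw [← Real.cos_abs]
  simp [-Real.cos_abs]
  rw [Real.arccos_cos (abs_nonneg _) (abs_le.2 ⟨hθ.1.le, hθ.2⟩)]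
end

section
/- For any (u,φ), (v,ψ) ∈ Ũ(H), one has |ψ − φ|/N ≤ d̃((u,φ), (v,ψ)). -/
section UCoverAux
open Matrix
open scoped Matrix.Norms.L2Operator

lemma aux_exists_circle {S : Set ℂ} (hS : S.Finite) :
    ∃ θ : ℝ, -Complex.exp (θ * Complex.I) ∉ S := by
  by_contra! h
  have hinj : Set.InjOn (fun θ : ℝ => -Complex.exp (θ * Complex.I)) (Set.Ioc (-Real.pi) Real.pi) := by
    intro x hx y hy hxy
    have h1 : Complex.exp (x * Complex.I) = Complex.exp (y * Complex.I) := neg_injective hxy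
    have := congrArg Complex.arg h1
    rwa [Complex.arg_exp_mul_I, Complex.arg_exp_mul_I,
      (toIocMod_eq_self _).2 (by convert hx using 1; congr 1; ring),
      (toIocMod_eq_self _).2 (by convert hy using 1; congr 1; ring)] at this
  exact Set.infinite_of_injOn_mapsTo hinj (fun x _ => h x)
    (Set.Ioc_infinite (by linarith [Real.pi_pos])) hS

lemma aux_diag {N : ℕ} (W : Matrix (Fin N) (Fin N) ℂ) (hW : W ∈ unitary (Matrix (Fin N) (Fin N) ℂ)) :
    ∃ V ∈ unitary (Matrix (Fin N) (Fin N) ℂ), ∃ θ : Fin N → ℝ,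
      W = V * diagonal (fun j => Complex.exp (θ j * Complex.I)) * star V := by
  obtain ⟨α, hα⟩ := aux_exists_circle W.finite_spectrum
  set c : ℂ := Complex.exp (α * Complex.I) with hc
  have hc0 : c ≠ 0 := Complex.exp_ne_zero _
  have hcc : star c * c = 1 := by
    rw [mul_comm, Complex.star_def, Complex.mul_conj, Complex.normSq_eq_norm_sq, hc,
      Complex.norm_exp_ofReal_mul_I]; simp
  have hcc' : c * star c = 1 := by rw [mul_comm]; exact hcc
  have hW' : star c • W ∈ unitary (Matrix (Fin N) (Fin N) ℂ) := by
    rw [Unitary.mem_iff] at hW ⊢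
    simp only [star_smul, star_star, smul_mul_smul_comm, hW.1, hW.2, hcc, hcc', one_smul, and_self]
  have hspec : (-1 : ℂ) ∉ spectrum ℂ (star c • W) := by
    intro h
    apply hα
    rw [spectrum.mem_iff] at h ⊢
    intro h2
    apply h
    have : (algebraMap ℂ (Matrix (Fin N) (Fin N) ℂ)) (-1) - star c • W
        = algebraMap ℂ (Matrix (Fin N) (Fin N) ℂ) (star c) *
          ((algebraMap ℂ (Matrix (Fin N) (Fin N) ℂ)) (-c) - W) := by
      rw [mul_sub, ← map_mul, mul_neg, hcc, Algebra.smul_def]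
    rw [this]
    exact ((isUnit_iff_exists_inv.2 ⟨c, hcc⟩).map _).mul h2
  have hlt := (Unitary.norm_sub_one_lt_two_iff hW').2 hspec
  have hexp := expUnitary_argSelfAdjoint (u := ⟨star c • W, hW'⟩) hlt
  generalize Unitary.argSelfAdjoint (⟨star c • W, hW'⟩ : unitary (Matrix (Fin N) (Fin N) ℂ)) = B at hexp
  obtain ⟨A, hA⟩ := B
  have hexp' := congrArg Subtype.val hexp
  rw [selfAdjoint.expUnitary_coe] at hexp'
  simp only at hexp'
  have hH : A.IsHermitian := hA
  have hs := hH.spectral_theorem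
  rw [Unitary.conjStarAlgAut_apply] at hs
  refine ⟨hH.eigenvectorUnitary, hH.eigenvectorUnitary.2, fun j => hH.eigenvalues j + α, ?_⟩
  set V := hH.eigenvectorUnitary
  have h1 : Complex.I • A = ((Unitary.toUnits V : (Matrix (Fin N) (Fin N) ℂ)ˣ) : Matrix (Fin N) (Fin N) ℂ) *
      diagonal (fun j => (hH.eigenvalues j : ℂ) * Complex.I) *
      (((Unitary.toUnits V)⁻¹ : (Matrix (Fin N) (Fin N) ℂ)ˣ) : Matrix (Fin N) (Fin N) ℂ) := by
    conv_lhs => rw [hs]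
    have : diagonal (fun j => (hH.eigenvalues j : ℂ) * Complex.I) =
      Complex.I • (diagonal (RCLike.ofReal ∘ hH.eigenvalues) : Matrix (Fin N) (Fin N) ℂ) := by
      rw [← diagonal_smul]; congr 1; ext j; simp [mul_comm]
    rw [this]
    simp [V]
  rw [h1, Matrix.exp_units_conj, Matrix.exp_diagonal] at hexp'
  have h2 : W = c • (star c • W) := by rw [smul_smul, hcc', one_smul]
  have h3 : diagonal (fun j => Complex.exp (((hH.eigenvalues j + α : ℝ) : ℂ) * Complex.I)) =
      c • diagonal (NormedSpace.exp (fun j => (hH.eigenvalues j : ℂ) * Complex.I)) := by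
    rw [← diagonal_smul]; congr 1; ext j
    simp [Pi.coe_exp, ← Complex.exp_eq_exp_ℂ, hc, mul_comm]
    rw [← Complex.exp_add]; congr 1; ring
  rw [h3, h2, ← hexp']
  simp [V]

end UCoverAux

section UCoverAux2
open Matrix

lemma aux_det {N : ℕ} (M : Matrix (Fin N) (Fin N) ℂ) :
    LinearMap.det ((Matrix.toEuclideanCLM (n := Fin N) (𝕜 := ℂ) M : Op N) : Hsp N →ₗ[ℂ] Hsp N) = M.det := by
  rw [Matrix.coe_toEuclideanCLM_eq_toEuclideanLin, Matrix.toEuclideanLin_eq_toLin_orthonormal,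
    LinearMap.det_toLin]

lemma aux_det_deriv {N : ℕ} (M : ℝ → Fin N → Fin N → ℂ) (M' : Fin N → Fin N → ℂ) (t : ℝ)
    (h : HasDerivAt M M' t) (h1 : (Matrix.of (M t)) = 1) :
    HasDerivAt (fun s => (Matrix.of (M s)).det) (∑ i, M' i i) t := by
  let D : ContinuousMultilinearMap ℂ (fun _ : Fin N => Fin N → ℂ) ℂ :=
    { (Matrix.detRowAlternating (n := Fin N) (R := ℂ)).toMultilinearMap with
      cont := by
        change Continuous fun M : Matrix (Fin N) (Fin N) ℂ => M.det
        fun_prop }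
  have hD := (D.hasFDerivAt (M t)).restrictScalars ℝ
  have h2 := hD.comp_hasDerivAt t h
  have e : ((D.linearDeriv (M t)).restrictScalars ℝ) M' = ∑ i, M' i i := by
    rw [ContinuousLinearMap.coe_restrictScalars', ContinuousMultilinearMap.linearDeriv_apply]
    refine Finset.sum_congr rfl fun i _ => ?_
    change (Matrix.updateRow (Matrix.of (M t)) i (M' i)).det = _
    rw [h1, ← Matrix.cramer_transpose_apply]
    simp
  rw [e] at h2
  exact h2

lemma aux_entry {N : ℕ} (T : Op N) (i j : Fin N) :
    ‖(Matrix.toEuclideanCLM (n := Fin N) (𝕜 := ℂ)).symm T i j‖ ≤ ‖T‖ := by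
  obtain ⟨M, rfl⟩ : ∃ M, Matrix.toEuclideanCLM (n := Fin N) (𝕜 := ℂ) M = T :=
    ⟨(Matrix.toEuclideanCLM (n := Fin N) (𝕜 := ℂ)).symm T, StarAlgEquiv.apply_symm_apply _ _⟩
  rw [StarAlgEquiv.symm_apply_apply]
  have : M i j = (Matrix.toEuclideanCLM (n := Fin N) (𝕜 := ℂ) M (EuclideanSpace.single j 1)) i := by
    simp [Matrix.ofLp_toEuclideanCLM]
  rw [this]
  refine (PiLp.norm_apply_le _ i).trans ((ContinuousLinearMap.le_opNorm _ _).trans ?_)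
  simp

lemma aux_bound {N : ℕ} (γ : ℝ → Op N) (f : ℝ → ℝ) (γ' : Op N) (f' t : ℝ)
    (hγ : HasDerivAt γ γ' t) (hf : HasDerivAt f f' t)
    (hU : ∀ᶠ s in nhds t, InUCover N (γ s) (f s)) : |f'| ≤ N * ‖γ'‖ := by
  have ht := hU.self_of_nhds
  let L : Op N →ₗ[ℝ] (Fin N → Fin N → ℂ) :=
    { toFun := fun T => (Matrix.toEuclideanCLM (n := Fin N) (𝕜 := ℂ)).symm (star (γ t) * T)
      map_add' := fun x y => by rw [mul_add, map_add]; rfl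
      map_smul' := fun c x => by
        have : star (γ t) * (c • x) = (c : ℂ) • (star (γ t) * x) := by
          rw [← Algebra.mul_smul_comm]; rfl
        rw [this, map_smul]; rfl }
  have hL : HasDerivAt (fun s => L (γ s)) (L γ') t :=
    (LinearMap.toContinuousLinearMap L).hasFDerivAt.comp_hasDerivAt t hγ
  have h1 : Matrix.of (L (γ t)) = 1 := by
    change (Matrix.toEuclideanCLM (n := Fin N) (𝕜 := ℂ)).symm (star (γ t) * γ t) = 1
    rw [Unitary.star_mul_self_of_mem ht.1, map_one]
  have hd := aux_det_deriv _ _ t hL h1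
  have he : (fun s => (Matrix.of (L (γ s))).det) =ᶠ[nhds t]
      fun s => Complex.exp (((f s - f t : ℝ) : ℂ) * Complex.I) := by
    filter_upwards [hU] with s hs
    have e1 : LinearMap.det ((star (γ t) : Op N) : Hsp N →ₗ[ℂ] Hsp N) * Complex.exp (f t * Complex.I) = 1 := by
      rw [← ht.2, ← map_mul]
      have : ((star (γ t) : Op N) : Hsp N →ₗ[ℂ] Hsp N) * ((γ t : Op N) : Hsp N →ₗ[ℂ] Hsp N)
        = ((star (γ t) * γ t : Op N) : Hsp N →ₗ[ℂ] Hsp N) := rfl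
      rw [this, Unitary.star_mul_self_of_mem ht.1]
      exact LinearMap.det_id
    change ((Matrix.toEuclideanCLM (n := Fin N) (𝕜 := ℂ)).symm (star (γ t) * γ s)).det = _
    rw [← aux_det, StarAlgEquiv.apply_symm_apply]
    have : ((star (γ t) * γ s : Op N) : Hsp N →ₗ[ℂ] Hsp N) =
      ((star (γ t) : Op N) : Hsp N →ₗ[ℂ] Hsp N) * ((γ s : Op N) : Hsp N →ₗ[ℂ] Hsp N) := rfl
    rw [this, map_mul, hs.2, Complex.ofReal_sub, sub_mul, Complex.exp_sub,
      eq_div_iff (Complex.exp_ne_zero _), mul_right_comm, e1, one_mul]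
  have hd2 : HasDerivAt (fun s => Complex.exp (((f s - f t : ℝ) : ℂ) * Complex.I))
      (f' * Complex.I) t := by
    have := (((hf.sub_const (f t)).ofReal_comp).mul_const Complex.I).cexp
    simpa using this
  have hEq := hd.unique (hd2.congr_of_eventuallyEq he)
  have hn : |f'| = ‖∑ i, L γ' i i‖ := by rw [hEq]; simp
  rw [hn]
  calc _ ≤ ∑ i : Fin N, ‖L γ' i i‖ := norm_sum_le _ _
    _ ≤ ∑ i : Fin N, ‖γ'‖ := by
        refine Finset.sum_le_sum fun i _ => (aux_entry _ i i).trans ?_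
        rw [CStarRing.norm_mem_unitary_mul _ (Unitary.star_mem ht.1)]
    _ = N * ‖γ'‖ := by simp

lemma aux_piece_s6 {N : ℕ} (γ : ℝ → Op N) (f : ℝ → ℝ) (a b : ℝ) (hab : a ≤ b)
    (hc : ContDiffOn ℝ 1 (fun t => (γ t, f t)) (Set.Icc a b))
    (hU : ∀ t ∈ Set.Icc a b, InUCover N (γ t) (f t)) :
    IntervalIntegrable (fun t => ‖deriv γ t‖) MeasureTheory.volume a b ∧
    |f b - f a| ≤ N * ∫ t in a..b, ‖deriv γ t‖ := by
  rcases hab.eq_or_lt with rfl | hlt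
  · simp
  have hγ : ContDiffOn ℝ 1 γ (Set.Icc a b) := hc.fst
  have hf : ContDiffOn ℝ 1 f (Set.Icc a b) := hc.snd
  have hud := uniqueDiffOn_Icc hlt
  have iγ : IntervalIntegrable (fun t => ‖deriv γ t‖) MeasureTheory.volume a b := by
    have := (hγ.continuousOn_derivWithin hud le_rfl).norm
    rw [← Set.uIcc_of_le hab] at this
    refine this.intervalIntegrable.congr_uIoo ?_
    intro t ht
    rw [Set.uIoo_of_le hab] at ht
    simp only [Set.uIcc_of_le hab]
    rw [derivWithin_of_mem_nhds (Icc_mem_nhds ht.1 ht.2)]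
  have jf : IntervalIntegrable (deriv f) MeasureTheory.volume a b := by
    have := (hf.continuousOn_derivWithin hud le_rfl)
    rw [← Set.uIcc_of_le hab] at this
    refine this.intervalIntegrable.congr_uIoo ?_
    intro t ht
    rw [Set.uIoo_of_le hab] at ht
    simp only [Set.uIcc_of_le hab]
    rw [derivWithin_of_mem_nhds (Icc_mem_nhds ht.1 ht.2)]
  refine ⟨iγ, ?_⟩
  have hdf : ∀ t ∈ Set.Ioo a b, HasDerivAt f (deriv f t) t := fun t ht =>
    ((hf.contDiffAt (Icc_mem_nhds ht.1 ht.2)).differentiableAt one_ne_zero).hasDerivAt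
  have hdγ : ∀ t ∈ Set.Ioo a b, HasDerivAt γ (deriv γ t) t := fun t ht =>
    ((hγ.contDiffAt (Icc_mem_nhds ht.1 ht.2)).differentiableAt one_ne_zero).hasDerivAt
  rw [← intervalIntegral.integral_eq_sub_of_hasDerivAt_of_le hab hf.continuousOn hdf jf,
    ← intervalIntegral.integral_const_mul]
  refine (intervalIntegral.abs_integral_le_integral_abs hab).trans ?_
  refine intervalIntegral.integral_mono_on_of_le_Ioo hab jf.abs (iγ.const_mul _) ?_
  intro t ht
  refine aux_bound γ f _ _ t (hdγ t ht) (hdf t ht) ?_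
  filter_upwards [Icc_mem_nhds ht.1 ht.2] with s hs using hU s hs

lemma aux_lower_s6 {N : ℕ} (γ : ℝ → Op N) (f : ℝ → ℝ) (a b : ℝ)
    (hc : PiecewiseC1On (fun t => (γ t, f t)) a b)
    (hU : ∀ t ∈ Set.Icc a b, InUCover N (γ t) (f t)) :
    |f b - f a| ≤ N * pathLength γ a b := by
  obtain ⟨n, τ, rfl, rfl, hmono, hC⟩ := hc
  have hm : ∀ i j, i ≤ j → j ≤ n → τ i ≤ τ j := by
    intro i j hij
    induction j, hij using Nat.le_induction with
    | base => intro _; exact le_rfl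
    | succ k hk ih => intro hkn; exact (ih (by omega)).trans (hmono k (by omega))
  have hp : ∀ i < n, _ := fun i hi => aux_piece_s6 γ f (τ i) (τ (i + 1)) (hmono i hi) (hC i hi)
    (fun t ht => hU t ⟨(hm 0 i (by omega) (by omega)).trans ht.1,
      ht.2.trans (hm (i + 1) n (by omega) le_rfl)⟩)
  rw [pathLength, ← intervalIntegral.sum_integral_adjacent_intervals (fun i hi => (hp i hi).1),
    ← Finset.sum_range_sub (fun i => f (τ i)), Finset.mul_sum]
  exact (Finset.abs_sum_le_sum_abs _ _).trans
    (Finset.sum_le_sum fun i hi => (hp i (Finset.mem_range.1 hi)).2)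

lemma aux_nonempty {N : ℕ} (hN : 1 ≤ N) (u v : Op N) (φ ψ : ℝ)
    (hu : InUCover N u φ) (hv : InUCover N v ψ) :
    ∃ (γ : ℝ → Op N) (f : ℝ → ℝ), 
    ContDiff ℝ 1 (fun t => (γ t, f t)) ∧
    (∀ t, InUCover N (γ t) (f t)) ∧
    γ 0 = u ∧ f 0 = φ ∧ γ 1 = v ∧ f 1 = ψ := by
  let Φ := Matrix.toEuclideanCLM (n := Fin N) (𝕜 := ℂ)
  have huv : star u * v ∈ unitary (Op N) := mul_mem (Unitary.star_mem hu.1) hv.1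
  obtain ⟨V, hV, θ, hW⟩ := aux_diag (Φ.symm (star u * v)) (Unitary.map_mem Φ.symm huv)
  let i0 : Fin N := ⟨0, hN⟩
  have hstar : v = u * (star u * v) := by
    rw [← mul_assoc, Unitary.mul_star_self_of_mem hu.1, one_mul]
  have hWΦ : star u * v = Φ (V * diagonal (fun j => Complex.exp (θ j * Complex.I)) * star V) := by
    rw [← hW, StarAlgEquiv.apply_symm_apply]
  -- determinants along the path
  have hdetconj : ∀ d : Fin N → ℂ, LinearMap.det ((u * Φ (V * diagonal d * star V) : Op N) :
      Hsp N →ₗ[ℂ] Hsp N) = Complex.exp (φ * Complex.I) * ∏ j, d j := by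
    intro d
    have : ((u * Φ (V * diagonal d * star V) : Op N) : Hsp N →ₗ[ℂ] Hsp N) =
      ((u : Op N) : Hsp N →ₗ[ℂ] Hsp N) *
        ((Φ (V * diagonal d * star V) : Op N) : Hsp N →ₗ[ℂ] Hsp N) := rfl
    rw [this, map_mul, hu.2, aux_det, det_mul, det_mul, det_diagonal, mul_right_comm, ← det_mul,
      Unitary.mul_star_self_of_mem hV, det_one, one_mul]
  have hdet : Complex.exp (ψ * Complex.I) =
      Complex.exp (φ * Complex.I + ∑ j, (θ j : ℂ) * Complex.I) := by
    rw [← hv.2, hstar, hWΦ, hdetconj, Complex.exp_add, Complex.exp_sum]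
  obtain ⟨k, hk⟩ := Complex.exp_eq_exp_iff_exists_int.1 hdet
  have hk' : ψ = φ + ∑ j, θ j + k * (2 * Real.pi) := by
    have h : (ψ : ℂ) = φ + ∑ j, (θ j : ℂ) + k * (2 * Real.pi) := by
      apply mul_right_cancel₀ Complex.I_ne_zero
      rw [hk, ← Finset.sum_mul]; ring
    exact_mod_cast h
  let θ' : Fin N → ℝ := fun j => θ j + if j = i0 then k * (2 * Real.pi) else 0
  have hsum : ∑ j, θ' j = ψ - φ := by
    simp only [θ', Finset.sum_add_distrib, Finset.sum_ite_eq', Finset.mem_univ, if_true]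
    linarith
  have hexp : ∀ j, Complex.exp (θ' j * Complex.I) = Complex.exp (θ j * Complex.I) := by
    intro j
    simp only [θ']
    split_ifs
    · rw [Complex.exp_eq_exp_iff_exists_int]
      exact ⟨k, by push_cast; ring⟩
    · simp
  let d : ℝ → Fin N → ℂ := fun t j => Complex.exp ((t * θ' j : ℝ) * Complex.I)
  refine ⟨fun t => u * Φ (V * diagonal (d t) * star V), fun t => φ + t * (ψ - φ), ?_, ?_, ?_, ?_, ?_, ?_⟩
  · refine ContDiff.prodMk ?_ (by fun_prop)
    have : (fun t => u * Φ (V * diagonal (d t) * star V)) = fun t =>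
        ∑ j, d t j • (u * Φ (V * Matrix.single j j (1 : ℂ) * star V)) := by
      ext1 t
      have h1 : diagonal (d t) = ∑ j, d t j • Matrix.single j j (1 : ℂ) := by
        simp [Matrix.smul_single, Matrix.sum_single_eq_diagonal]
      rw [h1, Finset.mul_sum, Finset.sum_mul, map_sum, Finset.mul_sum]
      refine Finset.sum_congr rfl fun j _ => ?_
      rw [mul_smul_comm, smul_mul_assoc, map_smul, mul_smul_comm]
    rw [this]
    refine ContDiff.sum fun j _ => ?_
    have hd : ContDiff ℝ 1 (fun t => d t j) := by
      refine ContDiff.cexp (ContDiff.mul ?_ contDiff_const)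
      exact Complex.ofRealCLM.contDiff.comp (contDiff_id.mul contDiff_const)
    exact ((((1 : ℂ →L[ℂ] ℂ).smulRight
      (u * Φ (V * Matrix.single j j (1 : ℂ) * star V))).restrictScalars ℝ).contDiff).comp hd
  · intro t
    refine ⟨mul_mem hu.1 (Unitary.map_mem Φ (mul_mem (mul_mem hV ?_) (Unitary.star_mem hV))), ?_⟩
    · have hd : ∀ j, d t j * star (d t j) = 1 := by
        intro j
        rw [Complex.star_def, Complex.mul_conj, Complex.normSq_eq_norm_sq,
          Complex.norm_exp_ofReal_mul_I]; simp
      rw [Unitary.mem_iff, star_eq_conjTranspose, diagonal_conjTranspose, diagonal_mul_diagonal,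
        diagonal_mul_diagonal, ← diagonal_one]
      constructor <;> congr 1 <;> ext j
      · rw [mul_comm]; exact hd j
      · exact hd j
    · rw [hdetconj, ← Complex.exp_sum, ← Complex.exp_add, ← hsum]
      congr 1
      push_cast
      rw [Finset.mul_sum, add_mul, Finset.sum_mul]
  · simp [d, Unitary.mul_star_self_of_mem hV]
  · simp
  · have : d 1 = fun j => Complex.exp (θ j * Complex.I) := by
      ext j; simp only [d, one_mul]; exact hexp j
    simp only [this]
    rw [← hWΦ, ← hstar]
  · simp

end UCoverAux2

/-- for `(u,φ), (v,ψ) ∈ Ũ(H)`, `|ψ − φ|/N ≤ d̃((u,φ),(v,ψ))`. -/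
theorem abs_sub_div_le_ucoverDist (N : ℕ) (hN : 1 ≤ N) (u v : Op N) (φ ψ : ℝ)
    (hu : InUCover N u φ) (hv : InUCover N v ψ) :
    |ψ - φ| / (N : ℝ) ≤ ucoverDist N u φ v ψ := by
  have hN' : (0 : ℝ) < N := by exact_mod_cast hN
  refine le_csInf ?_ ?_
  · obtain ⟨γ, f, hc, hU, h1, h2, h3, h4⟩ := aux_nonempty hN u v φ ψ hu hv
    refine ⟨_, 0, 1, γ, f, zero_le_one, ⟨1, fun i => (i : ℝ), by simp, by simp, ?_, ?_⟩,
      fun t _ => hU t, h1, h2, h3, h4, rfl⟩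
    · intro i _; simp
    · intro i _; exact hc.contDiffOn
  · rintro l ⟨a, b, γ, f, _, hc, hU, rfl, rfl, rfl, rfl, rfl⟩
    rw [div_le_iff₀' hN']
    exact aux_lower_s6 γ f a b hc hU
end

section
/- The distance d̃ on Ũ(H) is non-degenerate: if d̃((u,φ), (v,ψ)) = 0 then u = v and φ = ψ. -/
open Complex NormedSpace

theorem piece {E : Type*} [NormedAddCommGroup E] [NormedSpace ℝ E] 
    (γ : ℝ → E) (a b : ℝ) (hab : a ≤ b) (h : ContDiffOn ℝ 1 γ (Set.Icc a b)) :
    IntervalIntegrable (fun t => ‖deriv γ t‖) MeasureTheory.volume a b := by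
  apply IntervalIntegrable.norm
  rcases eq_or_lt_of_le hab with rfl | hlt
  · simp
  have hc : ContinuousOn (derivWithin γ (Set.Icc a b)) (Set.Icc a b) :=
    h.continuousOn_derivWithin (uniqueDiffOn_Icc hlt) le_rfl
  have : IntervalIntegrable (derivWithin γ (Set.Icc a b)) MeasureTheory.volume a b :=
    ContinuousOn.intervalIntegrable (by rwa [Set.uIcc_of_le hab])
  refine this.congr_ae ?_
  rw [Set.uIoc_of_le hab, ← MeasureTheory.restrict_Ioo_eq_restrict_Ioc]
  filter_upwards [MeasureTheory.self_mem_ae_restrict measurableSet_Ioo] with x hx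
  exact derivWithin_of_mem_nhds (Icc_mem_nhds hx.1 hx.2)

theorem piece_bound {E : Type*} [NormedAddCommGroup E] [NormedSpace ℝ E] [CompleteSpace E]
    (γ : ℝ → E) (a b : ℝ) (h : ContDiffOn ℝ 1 γ (Set.Icc a b)) (hab : a ≤ b) :
    ‖γ b - γ a‖ ≤ ∫ t in a..b, ‖deriv γ t‖ := by
  rw [← intervalIntegral.integral_deriv_of_contDiffOn_Icc h hab]
  exact intervalIntegral.norm_integral_le_integral_norm hab

theorem pw_bound {E : Type*} [NormedAddCommGroup E] [NormedSpace ℝ E] [CompleteSpace E]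
    (γ : ℝ → E) (τ : ℕ → ℝ) (n : ℕ) (hm : ∀ i < n, τ i ≤ τ (i + 1))
    (h : ∀ i < n, ContDiffOn ℝ 1 γ (Set.Icc (τ i) (τ (i + 1)))) :
    τ 0 ≤ τ n ∧ ContinuousOn γ (Set.Icc (τ 0) (τ n)) ∧
    IntervalIntegrable (fun t => ‖deriv γ t‖) MeasureTheory.volume (τ 0) (τ n) ∧
    ∀ t ∈ Set.Icc (τ 0) (τ n), ‖γ t - γ (τ 0)‖ ≤ ∫ s in (τ 0)..t, ‖deriv γ s‖ := by
  induction n with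
  | zero => simp
  | succ n ih =>
    obtain ⟨h1, h2, h3, h4⟩ := ih (fun i hi => hm i (by omega)) (fun i hi => h i (by omega))
    have hmn := hm n (by omega)
    have hn := h n (by omega)
    refine ⟨h1.trans hmn, ?_, h3.trans (piece _ _ _ hmn hn), ?_⟩
    · rw [← Set.Icc_union_Icc_eq_Icc h1 hmn]
      exact h2.union_of_isClosed hn.continuousOn isClosed_Icc isClosed_Icc
    · intro t ht
      rcases le_total t (τ n) with hle | hle
      · exact h4 t ⟨ht.1, hle⟩
      · have hsub : ContDiffOn ℝ 1 γ (Set.Icc (τ n) t) := hn.mono (Set.Icc_subset_Icc_right ht.2)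
        have e1 := piece_bound γ _ _ hsub hle
        have e2 := h4 (τ n) ⟨h1, le_rfl⟩
        rw [← intervalIntegral.integral_add_adjacent_intervals h3 (piece _ _ _ hle hsub)]
        calc _ = ‖(γ (τ n) - γ (τ 0)) + (γ t - γ (τ n))‖ := by congr 1; abel
          _ ≤ _ := norm_add_le _ _
          _ ≤ _ := by linarith

theorem f_close (f : ℝ → ℝ) (a b : ℝ) (hab : a ≤ b) (hf : ContinuousOn f (Set.Icc a b))
    (h : ∀ t ∈ Set.Icc a b, ‖Complex.exp (f t * I) - Complex.exp (f a * I)‖ < 2)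
    (he : Complex.exp (f a * I) = Complex.exp (f b * I)) : f a = f b := by
  rw [Complex.exp_eq_exp_iff_exists_int] at he
  obtain ⟨k, hk⟩ := he
  have hk' : f a = f b + k * (2 * Real.pi) := by
    have : (f a : ℂ) * I = ((f b + k * (2 * Real.pi) : ℝ) : ℂ) * I := by
      rw [hk]; push_cast; ring
    exact_mod_cast mul_right_cancel₀ I_ne_zero this
  have key : ∀ c : ℝ, Complex.exp (c * I) = - Complex.exp (f a * I) → c ∉ f '' Set.Icc a b := by
    rintro c hc ⟨t, ht, rfl⟩
    have := h t ht
    rw [hc, ← neg_add', norm_neg, ← two_mul, norm_mul, Complex.norm_exp_ofReal_mul_I] at this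
    norm_num at this
  have hpi := Real.pi_pos
  rcases lt_trichotomy k 0 with hk0 | hk0 | hk0
  · exfalso
    have : (k : ℝ) ≤ -1 := by exact_mod_cast (by omega : k ≤ -1)
    refine key (f a + Real.pi) ?_ (intermediate_value_Icc hab hf ⟨by linarith, by nlinarith⟩)
    push_cast
    rw [add_mul, Complex.exp_add, Complex.exp_pi_mul_I]; ring
  · simpa [hk0] using hk'
  · exfalso
    have : (1 : ℝ) ≤ k := by exact_mod_cast hk0
    refine key (f a - Real.pi) ?_ (intermediate_value_Icc' hab hf ⟨by nlinarith, by linarith⟩)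
    push_cast
    rw [sub_mul, Complex.exp_sub, Complex.exp_pi_mul_I]; ring

section
open scoped Matrix.Norms.L2Operator
theorem exists_log1 {R : Type*} [CStarAlgebra R] (w : R) (hw : w ∈ unitary R)
   (hfin : (spectrum ℂ w).Finite) : ∃ A : R, star A = A ∧ NormedSpace.exp (I • A) = w := by
  have hcont : ContinuousOn arg (spectrum ℂ w) := hfin.continuousOn _
  refine ⟨Unitary.argSelfAdjoint ⟨w, hw⟩, (Unitary.argSelfAdjoint ⟨w, hw⟩).2.star_eq, ?_⟩
  have hnorm : IsStarNormal w := ⟨by rw [commute_iff_eq, hw.1, hw.2]⟩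
  rw [Unitary.argSelfAdjoint_coe, ← CFC.exp_eq_normedSpace_exp (𝕜 := ℂ),
      ← cfc_comp_smul .., ← cfc_comp' ..]
  conv_rhs => rw [← cfc_id' ℂ w]
  refine cfc_congr fun y hy ↦ ?_
  have hy₁ : ‖y‖ = 1 := spectrum.norm_eq_one_of_unitary hw hy
  have : I * y.arg = log y :=
      Complex.ext (by simp [log_re, hy₁]) (by simp [log_im])
  have hy0 : y ≠ 0 := by rintro rfl; simp at hy₁
  simpa [← exp_eq_exp_ℂ, this] using exp_log hy0

theorem exists_log2 {n : ℕ} (W : Matrix (Fin n) (Fin n) ℂ)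
    (hW : W ∈ unitary (Matrix (Fin n) (Fin n) ℂ)) :
    ∃ A : Matrix (Fin n) (Fin n) ℂ, A.IsHermitian ∧ NormedSpace.exp (I • A) = W := 
  exists_log1 W hW (Matrix.finite_spectrum W)
end

theorem exists_log {n : ℕ} (W : Matrix (Fin n) (Fin n) ℂ)
    (hW : W ∈ unitary (Matrix (Fin n) (Fin n) ℂ)) :
    ∃ U ∈ unitary (Matrix (Fin n) (Fin n) ℂ), ∃ θ : Fin n → ℝ, 
      W = U * Matrix.diagonal (fun j => Complex.exp (θ j * I)) * star U := by
  obtain ⟨B, hB, rfl⟩ := exists_log2 W hW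
  refine ⟨hB.eigenvectorUnitary, hB.eigenvectorUnitary.2, hB.eigenvalues, ?_⟩
  have hs := hB.spectral_theorem
  set V := hB.eigenvectorUnitary
  rw [Unitary.conjStarAlgAut_apply] at hs
  have hU : IsUnit (V : Matrix (Fin n) (Fin n) ℂ) := ⟨Unitary.toUnits V, rfl⟩
  have hinv : (V : Matrix (Fin n) (Fin n) ℂ)⁻¹ = star (V : Matrix (Fin n) (Fin n) ℂ) :=
    Matrix.inv_eq_left_inv V.2.1
  have h2 : I • B = V * (Matrix.diagonal (fun j => (hB.eigenvalues j : ℂ) * I)) * (V : Matrix (Fin n) (Fin n) ℂ)⁻¹ := by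
    conv_lhs => rw [hs]
    rw [hinv, ← Matrix.smul_mul, ← Matrix.mul_smul]
    congr 2
    ext i j
    by_cases h : i = j
    · subst h; simp [mul_comm]
    · simp [h]
  rw [h2, Matrix.exp_conj _ _ hU, hinv, Matrix.exp_diagonal]
  congr 3
  ext j
  rw [Pi.coe_exp, exp_eq_exp_ℂ]

theorem exists_curve {N : ℕ} (hN : 1 ≤ N) (W : Matrix (Fin N) (Fin N) ℂ)
    (hW : W ∈ unitary (Matrix (Fin N) (Fin N) ℂ)) (c : ℝ) (hdet : W.det = Complex.exp (c * I)) :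
    ∃ U ∈ unitary (Matrix (Fin N) (Fin N) ℂ), ∃ θ : Fin N → ℝ, ∑ j, θ j = c ∧
      W = U * Matrix.diagonal (fun j => Complex.exp (θ j * I)) * star U := by
  obtain ⟨U, hU, θ, rfl⟩ := exists_log W hW
  refine ⟨U, hU, ?_⟩
  have hd : (U * Matrix.diagonal (fun j => Complex.exp (θ j * I)) * star U).det
      = Complex.exp ((∑ j, θ j : ℝ) * I) := by
    rw [Matrix.det_mul_right_comm, hU.2, one_mul, Matrix.det_diagonal, ← Complex.exp_sum]
    push_cast
    rw [Finset.sum_mul]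
  rw [hd, Complex.exp_eq_exp_iff_exists_int] at hdet
  obtain ⟨k, hk⟩ := hdet
  have hk' : ∑ j, θ j = c + k * (2 * Real.pi) := by
    have : ((∑ j, θ j : ℝ) : ℂ) * I = ((c + k * (2 * Real.pi) : ℝ) : ℂ) * I := by
      rw [hk]; push_cast; ring
    exact_mod_cast mul_right_cancel₀ I_ne_zero this
  let z : Fin N := ⟨0, hN⟩
  refine ⟨fun j => θ j - if j = z then k * (2 * Real.pi) else 0, ?_, ?_⟩
  · rw [Finset.sum_sub_distrib, hk']; simp
  · congr 3
    ext j
    dsimp only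
    split_ifs
    · rw [Complex.exp_eq_exp_iff_exists_int]
      exact ⟨k, by push_cast; ring⟩
    · simp

theorem curve_props {N : ℕ} (U : Matrix (Fin N) (Fin N) ℂ)
    (hU : U ∈ unitary (Matrix (Fin N) (Fin N) ℂ)) (θ : Fin N → ℝ) :
    (U * Matrix.diagonal (fun j => Complex.exp (θ j * I)) * star U) ∈ 
      unitary (Matrix (Fin N) (Fin N) ℂ) ∧ 
    (U * Matrix.diagonal (fun j => Complex.exp (θ j * I)) * star U).det
      = Complex.exp ((∑ j, θ j : ℝ) * I) := by
  constructor
  · refine mul_mem (mul_mem hU ?_) (Unitary.star_mem hU)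
    have h1 : ∀ j, (starRingEnd ℂ) (Complex.exp (θ j * I)) * Complex.exp (θ j * I) = 1 := by
      intro j
      rw [← Complex.exp_conj, ← Complex.exp_add]; simp
    rw [Unitary.mem_iff]
    constructor
    · rw [Matrix.star_eq_conjTranspose, Matrix.diagonal_conjTranspose, Matrix.diagonal_mul_diagonal,
        ← Matrix.diagonal_one]
      congr 1; ext j; exact h1 j
    · rw [Matrix.star_eq_conjTranspose, Matrix.diagonal_conjTranspose, Matrix.diagonal_mul_diagonal,
        ← Matrix.diagonal_one]
      congr 1; ext j; rw [mul_comm]; exact h1 j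
  · rw [Matrix.det_mul_right_comm, hU.2, one_mul, Matrix.det_diagonal, ← Complex.exp_sum]
    push_cast
    rw [Finset.sum_mul]

theorem unitary_curve (N : ℕ) (hN : 1 ≤ N) (w : Op N) (c : ℝ) (hw : InUCover N w c) :
    ∃ γ : ℝ → Op N, ContDiff ℝ 1 γ ∧ γ 0 = 1 ∧ γ 1 = w ∧ ∀ t : ℝ, InUCover N (γ t) (t * c) := by
  let e := Matrix.toEuclideanCLM (n := Fin N) (𝕜 := ℂ)
  have hdet : ∀ M, LinearMap.det ((e M : Op N) : Hsp N →ₗ[ℂ] Hsp N) = M.det := by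
    intro M
    rw [Matrix.coe_toEuclideanCLM_eq_toEuclideanLin]
    exact LinearMap.det_toLpLin 2 M
  obtain ⟨W, rfl⟩ : ∃ W, e W = w := ⟨e.symm w, e.apply_symm_apply w⟩
  have hinj : Function.Injective e := e.injective
  have hW : W ∈ unitary (Matrix (Fin N) (Fin N) ℂ) := by
    rw [Unitary.mem_iff]
    constructor
    · apply hinj
      rw [map_mul, map_star, map_one]; exact hw.1.1
    · apply hinj
      rw [map_mul, map_star, map_one]; exact hw.1.2
  obtain ⟨U, hU, θ, hθ, hWU⟩ := exists_curve hN W hW c (by rw [← hdet]; exact hw.2)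
  let L : (Fin N → ℂ) →ₗ[ℂ] Op N :=
    { toFun := fun d => e (U * Matrix.diagonal d * star U)
      map_add' := by
        intro x y
        rw [← map_add, ← add_mul, ← mul_add, Matrix.diagonal_add]; rfl
      map_smul' := by
        intro r x
        rw [Matrix.diagonal_smul, Matrix.mul_smul, Matrix.smul_mul, map_smul]; rfl }
  let Lc : (Fin N → ℂ) →L[ℂ] Op N := LinearMap.toContinuousLinearMap L
  refine ⟨fun t => Lc (fun j => Complex.exp (((t * θ j : ℝ) : ℂ) * I)), ?_, ?_, ?_, ?_⟩
  · refine (Lc.restrictScalars ℝ).contDiff.comp ?_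
    rw [contDiff_pi]
    intro j
    refine Complex.contDiff_exp.comp (ContDiff.mul ?_ contDiff_const)
    exact Complex.ofRealCLM.contDiff.comp (contDiff_id.mul contDiff_const)
  · change e (U * Matrix.diagonal _ * star U) = 1
    have : (fun j => Complex.exp (((0 * θ j : ℝ) : ℂ) * I)) = fun _ => 1 := by ext j; simp
    rw [this, Matrix.diagonal_one, mul_one, hU.2, map_one]
  · change e (U * Matrix.diagonal _ * star U) = e W
    simp only [one_mul]
    rw [← hWU]
  · intro t
    obtain ⟨h1, h2⟩ := curve_props U hU (fun j => t * θ j)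
    refine ⟨Unitary.map_mem e h1, ?_⟩
    refine (hdet _).trans (h2.trans ?_)
    rw [← Finset.mul_sum, hθ]

theorem InUCover.mul' {N : ℕ} {u v : Op N} {a b : ℝ} (hu : InUCover N u a) (hv : InUCover N v b) :
    InUCover N (u * v) (a + b) := by
  refine ⟨mul_mem hu.1 hv.1, ?_⟩
  have : ((u * v : Op N) : Hsp N →ₗ[ℂ] Hsp N) = (u : Hsp N →ₗ[ℂ] Hsp N) * (v : Hsp N →ₗ[ℂ] Hsp N) := rfl
  rw [this, map_mul, hu.2, hv.2, ← Complex.exp_add]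
  push_cast
  rw [add_mul]

theorem InUCover.star' {N : ℕ} {u : Op N} {a : ℝ} (hu : InUCover N u a) :
    InUCover N (star u) (-a) := by
  refine ⟨Unitary.star_mem hu.1, ?_⟩
  have h1 : (u : Hsp N →ₗ[ℂ] Hsp N) * ((star u : Op N) : Hsp N →ₗ[ℂ] Hsp N) = 1 := by
    have := congrArg (fun x : Op N => (x : Hsp N →ₗ[ℂ] Hsp N)) hu.1.2
    exact this
  have h2 := congrArg LinearMap.det h1
  rw [map_mul, map_one, hu.2] at h2
  push_cast
  rw [neg_mul, Complex.exp_neg]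
  exact eq_inv_of_mul_eq_one_right h2

/-- the distance `d̃` on `Ũ(H)` is non-degenerate:
`d̃((u,φ),(v,ψ)) = 0` implies `u = v` and `φ = ψ`. -/
theorem ucoverDist_eq_zero_iff (N : ℕ) (hN : 1 ≤ N) (u v : Op N) (φ ψ : ℝ)
    (hu : InUCover N u φ) (hv : InUCover N v ψ)
    (h : ucoverDist N u φ v ψ = 0) : u = v ∧ φ = ψ := by
  unfold ucoverDist at h
  set S := {l | ∃ (a b : ℝ) (γ : ℝ → Op N) (f : ℝ → ℝ), a ≤ b ∧
    PiecewiseC1On (fun t => (γ t, f t)) a b ∧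
    (∀ t ∈ Set.Icc a b, InUCover N (γ t) (f t)) ∧
    γ a = u ∧ f a = φ ∧ γ b = v ∧ f b = ψ ∧
    l = pathLength γ a b} with hS
  have hne : S.Nonempty := by
    obtain ⟨γ, hγ, h0, h1, hc⟩ := unitary_curve N hN (star u * v) (-φ + ψ) (hu.star'.mul' hv)
    refine ⟨_, 0, 1, fun t => u * γ t, fun t => φ + t * (-φ + ψ), zero_le_one, ?_, ?_, ?_, ?_, ?_, ?_, rfl⟩
    · refine ⟨1, fun i => i, by simp, by simp, by simp, fun i _ => ContDiff.contDiffOn ?_⟩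
      exact (contDiff_const.mul hγ).prodMk (contDiff_const.add (contDiff_id.mul contDiff_const))
    · intro t _
      exact hu.mul' (hc t)
    · simp [h0]
    · simp
    · simp only [h1]
      rw [← mul_assoc, hu.1.2, one_mul]
    · simp
  have main : ∀ ε > 0, ∃ (a b : ℝ) (γ : ℝ → Op N) (f : ℝ → ℝ), a ≤ b ∧
      ContinuousOn f (Set.Icc a b) ∧
      (∀ t ∈ Set.Icc a b, InUCover N (γ t) (f t)) ∧
      γ a = u ∧ f a = φ ∧ γ b = v ∧ f b = ψ ∧ ∀ t ∈ Set.Icc a b, ‖γ t - u‖ < ε := by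
    intro ε hε
    obtain ⟨l, ⟨a, b, γ, f, hab, ⟨n, τ, h0, hn, hm, hd⟩, hc, hγa, hfa, hγb, hfb, hl⟩, hlt⟩ :=
      exists_lt_of_csInf_lt hne (h.trans_lt hε)
    obtain ⟨-, hcont, -, -⟩ := pw_bound _ τ n hm hd
    obtain ⟨-, -, hint, hb⟩ := pw_bound γ τ n hm (fun i hi => contDiff_fst.comp_contDiffOn (hd i hi))
    rw [h0, hn] at hcont hint hb
    refine ⟨a, b, γ, f, hab, continuous_snd.comp_continuousOn hcont, hc, hγa, hfa, hγb, hfb, ?_⟩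
    intro t ht
    rw [← hγa]
    refine (hb t ht).trans_lt (lt_of_le_of_lt ?_ hlt)
    rw [hl, pathLength]
    refine intervalIntegral.integral_mono_interval le_rfl ht.1 ht.2 ?_ hint
    exact Filter.Eventually.of_forall fun x => norm_nonneg _
  have huv : u = v := by
    by_contra hne'
    obtain ⟨a, b, γ, f, hab, -, -, -, -, hγb, -, hlt⟩ := main ‖v - u‖
      (norm_pos_iff.2 (sub_ne_zero.2 (Ne.symm hne')))
    have := hlt b ⟨hab, le_rfl⟩
    rw [hγb] at this
    exact lt_irrefl _ this
  refine ⟨huv, ?_⟩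
  have hdc : Continuous (fun x : Op N => LinearMap.det (x : Hsp N →ₗ[ℂ] Hsp N)) :=
    ContinuousLinearMap.continuous_det
  obtain ⟨ε, hε, hball⟩ := Metric.continuous_iff.1 hdc u 2 two_pos
  obtain ⟨a, b, γ, f, hab, hf, hc, hγa, hfa, hγb, hfb, hlt⟩ := main ε hε
  rw [← hfa, ← hfb]
  refine f_close f a b hab hf ?_ ?_
  · intro t ht
    have := hball (γ t) (by rw [dist_eq_norm]; exact hlt t ht)
    rw [dist_eq_norm, (hc t ht).2, hu.2] at this
    rwa [hfa]
  · rw [hfa, hfb, ← hu.2, ← hv.2, huv]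
end

section
/- For any (u,φ), (v,ψ) ∈ Ũ(H) and any θ ∈ R, one has d̃((u,φ), (v,ψ)) ≤ max_j |θ_j|; consequently d̃((u,φ), (v,ψ)) ≤ m. (Indeed, if H is the Hermitian endomorphism with H X_j = θ_j X_j in an orthonormal eigenbasis (X_j) of vu^{-1}, the path t ↦ (e^{itH}u, φ + t·tr H), t ∈ [0,1], joins (u,φ) to (v,ψ) and has length ‖H‖ = max_j |θ_j|.) -/
theorem exists_perm_of_map_eq {N : ℕ} (f g : Fin N → ℂ)
    (h : Multiset.map f Finset.univ.val = Multiset.map g Finset.univ.val) :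
    ∃ σ : Fin N ≃ Fin N, ∀ i, g (σ i) = f i := by
  classical
  have key : ∀ c, Nonempty ({a // f a = c} ≃ {a // g a = c}) := by
    intro c
    have h2 := congrArg (Multiset.count c) h
    rw [Multiset.count_map, Multiset.count_map] at h2
    refine ⟨Fintype.equivOfCardEq ?_⟩
    rw [Fintype.card_subtype, Fintype.card_subtype, Finset.card_def, Finset.card_def,
      Finset.filter_val, Finset.filter_val]
    simpa [eq_comm] using h2
  have e := fun c => Classical.choice (key c)
  exact ⟨Equiv.ofFiberEquiv (f := f) (g := g) e, fun i => Equiv.ofFiberEquiv_map e i⟩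

theorem exists_diag {N : ℕ} (w : Op N) (hw : w ∈ unitary (Op N)) :
    ∃ (b : OrthonormalBasis (Fin N) ℂ (Hsp N)) (μ : Fin N → ℂ), ∀ i, w (b i) = μ i • b i := by
  classical
  have hc : Commute w (star w) := by
    have := Unitary.mem_iff.1 hw
    rw [commute_iff_eq, this.1, this.2]
  let A : Op N := w + star w
  let B : Op N := Complex.I • (w - star w)
  have hA : IsSelfAdjoint A := by
    exact IsSelfAdjoint.add_star_self w
  have hB : IsSelfAdjoint B := by
    have h1 : star (w - star w) = -(w - star w) := by
      rw [star_sub w (star w), star_star, neg_sub]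
    have h2 : star Complex.I = -Complex.I := Complex.conj_I
    rw [isSelfAdjoint_iff]
    simp only [B]
    rw [star_smul, h1, h2]
    exact neg_smul_neg Complex.I (w - star w)
  have hAB : Commute A B := by
    apply Commute.smul_right
    exact ((Commute.refl w).sub_right hc).add_left (hc.symm.sub_right (Commute.refl _))
  have hA' := ContinuousLinearMap.isSelfAdjoint_iff_isSymmetric.1 hA
  have hB' := ContinuousLinearMap.isSelfAdjoint_iff_isSymmetric.1 hB
  have hAB' : Commute (A : Hsp N →ₗ[ℂ] Hsp N) (B : Hsp N →ₗ[ℂ] Hsp N) := by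
    have h1 : A * B = B * A := hAB
    ext1 x
    exact congrArg (fun T : Op N => T x) h1
  have hint := LinearMap.IsSymmetric.directSum_isInternal_of_commute hA' hB' hAB'
  have horth := LinearMap.IsSymmetric.orthogonalFamily_eigenspace_inf_eigenspace hA' hB'
  have hfin := Submodule.finite_ne_bot_of_iSupIndep hint.submodule_iSupIndep
  have hint2 := DirectSum.isInternal_ne_bot_iff.2 hint
  have horth2 := horth.comp (γ := {i : ℂ × ℂ // _}) (Subtype.val_injective (p := fun i : ℂ × ℂ =>
    Module.End.eigenspace (A : Hsp N →ₗ[ℂ] Hsp N) i.2 ⊓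
      Module.End.eigenspace (B : Hsp N →ₗ[ℂ] Hsp N) i.1 ≠ ⊥))
  have : Fintype {i : ℂ × ℂ // Module.End.eigenspace (A : Hsp N →ₗ[ℂ] Hsp N) i.2 ⊓
      Module.End.eigenspace (B : Hsp N →ₗ[ℂ] Hsp N) i.1 ≠ ⊥} := hfin.fintype
  have hn : Module.finrank ℂ (Hsp N) = N := by simp
  refine ⟨hint2.subordinateOrthonormalBasis hn horth2, fun i =>
    (1/2 : ℂ) * ((hint2.subordinateOrthonormalBasisIndex hn i horth2).1.2
      - Complex.I * (hint2.subordinateOrthonormalBasisIndex hn i horth2).1.1), fun i => ?_⟩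
  have hm := hint2.subordinateOrthonormalBasis_subordinate hn i horth2
  obtain ⟨h1, h2⟩ := Submodule.mem_inf.1 hm
  rw [Module.End.mem_eigenspace_iff] at h1 h2
  set x := hint2.subordinateOrthonormalBasis hn horth2 i
  have h1' : w x + (star w) x = _ := h1
  have h2' : Complex.I • (w x - (star w) x) = _ := h2
  rw [mul_smul, sub_smul, mul_smul, ← h1', ← h2', smul_smul, Complex.I_mul_I]
  module

/-- diagonal operator -/
noncomputable def Dg {N : ℕ} (b : OrthonormalBasis (Fin N) ℂ (Hsp N)) (f : Fin N → ℂ) : Op N :=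
  ∑ j, f j • ((innerSL ℂ (b j)).smulRight (b j))

section
variable {N : ℕ} (b : OrthonormalBasis (Fin N) ℂ (Hsp N))

theorem Dg_apply (f : Fin N → ℂ) (x : Hsp N) : Dg b f x = ∑ j, (f j * inner ℂ (b j) x) • b j := by
  simp [Dg, mul_smul]

theorem Dg_basis (f : Fin N → ℂ) (i : Fin N) : Dg b f (b i) = f i • b i := by
  classical
  rw [Dg_apply]
  simp [b.inner_eq_ite]

theorem op_ext {S T : Op N} (h : ∀ i, S (b i) = T (b i)) : S = T := by
  have : (S : Hsp N →ₗ[ℂ] Hsp N) = T := b.toBasis.ext (by simpa using h)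
  exact ContinuousLinearMap.coe_injective this

theorem Dg_mul (f g : Fin N → ℂ) : Dg b f * Dg b g = Dg b (f * g) := by
  apply op_ext b
  intro i
  rw [mul_apply_eq_comp]
  simp only [Dg_basis, map_smul, smul_smul, Pi.mul_apply, mul_comm]

theorem Dg_one : Dg b 1 = 1 := by
  apply op_ext b
  intro i
  simp [Dg_basis]

theorem Dg_star (f : Fin N → ℂ) : star (Dg b f) = Dg b (star f) := by
  rw [ContinuousLinearMap.star_eq_adjoint]
  symm
  rw [ContinuousLinearMap.eq_adjoint_iff]
  intro x y
  rw [Dg_apply, Dg_apply, sum_inner, inner_sum]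
  refine Finset.sum_congr rfl fun j _ => ?_
  simp only [inner_smul_left, inner_smul_right, Pi.star_apply, map_mul, inner_conj_symm,
    RCLike.star_def, RCLike.conj_conj]
  ring

theorem Dg_unitary (f : Fin N → ℂ) (hf : ∀ i, ‖f i‖ = 1) : Dg b f ∈ unitary (Op N) := by
  have h : star f * f = 1 := by
    ext i
    simp [RCLike.star_def, RCLike.conj_mul, hf]
  rw [Unitary.mem_iff, Dg_star, Dg_mul, Dg_mul, mul_comm f, h, Dg_one]
  simp

theorem Dg_toMatrix (f : Fin N → ℂ) (T : Op N) (hT : ∀ i, T (b i) = f i • b i) :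
    LinearMap.toMatrix b.toBasis b.toBasis (T : Hsp N →ₗ[ℂ] Hsp N) = Matrix.diagonal f := by
  classical
  ext i j
  rw [LinearMap.toMatrix_apply]
  simp only [OrthonormalBasis.coe_toBasis, ContinuousLinearMap.coe_coe, hT, map_smul,
    Finsupp.smul_apply]
  rw [← b.coe_toBasis, Module.Basis.repr_self, Matrix.diagonal_apply, Finsupp.single_apply]
  by_cases h : i = j
  · subst h; simp
  · simp [h, Ne.symm h]

theorem Dg_det (f : Fin N → ℂ) : LinearMap.det (Dg b f : Hsp N →ₗ[ℂ] Hsp N) = ∏ i, f i := by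
  rw [← LinearMap.det_toMatrix b.toBasis, Dg_toMatrix b f _ (Dg_basis b f), Matrix.det_diagonal]

theorem Dg_norm (f : Fin N → ℂ) (M : ℝ) (hM : 0 ≤ M) (hf : ∀ i, ‖f i‖ ≤ M) : ‖Dg b f‖ ≤ M := by
  refine ContinuousLinearMap.opNorm_le_bound _ hM fun x => ?_
  refine abs_le_of_sq_le_sq' ?_ (by positivity) |>.2
  rw [mul_pow, ← b.sum_sq_norm_inner_right x, ← b.sum_sq_norm_inner_right (Dg b f x),
    Finset.mul_sum]
  refine Finset.sum_le_sum fun i _ => ?_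
  have : inner ℂ (b i) (Dg b f x) = f i * inner ℂ (b i) x := by
    classical
    rw [Dg_apply, inner_sum]
    simp [inner_smul_right, b.inner_eq_ite]
  rw [this, norm_mul, mul_pow]
  gcongr
  exact hf i

theorem roots_of_diag (w : Op N) (μ : Fin N → ℂ) (h : ∀ i, w (b i) = μ i • b i) :
    eigenvalueMultiset N w = Multiset.map μ Finset.univ.val := by
  rw [eigenvalueMultiset, ← LinearMap.charpoly_toMatrix _ b.toBasis, Dg_toMatrix b μ w h,
    Matrix.charpoly_diagonal, Polynomial.roots_prod _ _ (by
      simp [Finset.prod_ne_zero_iff, Polynomial.X_sub_C_ne_zero])]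
  simp

end

theorem ucoverDist_le_theta_aux (N : ℕ) (u v : unitary (Op N))
    (φ ψ : ℝ) (hu : InUCover N ↑u φ)
    (θ : Fin N → ℝ) (hθ : InRSet N ↑(v * u⁻¹) (ψ - φ) θ) :
    ucoverDist N ↑u φ ↑v ψ ≤ ⨆ j, |θ j| := by
  obtain ⟨hroots, hsum⟩ := hθ
  obtain ⟨b₀, μ, hb₀⟩ := exists_diag ((v * u⁻¹ : unitary (Op N)) : Op N) (v * u⁻¹).2
  rw [roots_of_diag b₀ _ μ hb₀] at hroots
  obtain ⟨σ, hσ⟩ := exists_perm_of_map_eq _ _ hroots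
  let b := b₀.reindex σ.symm
  have hb : ∀ i, ((v * u⁻¹ : unitary (Op N)) : Op N) (b i) =
      Complex.exp ((θ i : ℂ) * Complex.I) • b i := by
    intro i
    simp only [b, OrthonormalBasis.reindex_apply, Equiv.symm_symm]
    rw [hb₀, hσ]
  set M := ⨆ j, |θ j| with hMdef
  have hM : ∀ j, |θ j| ≤ M := fun j => le_ciSup (Set.finite_range (fun j => |θ j|)).bddAbove j
  have hM0 : 0 ≤ M := Real.iSup_nonneg fun j => abs_nonneg _
  let e : ℝ → Fin N → ℂ := fun t j => Complex.exp ((t : ℂ) * ((θ j : ℂ) * Complex.I))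
  have he : ∀ t j, ‖e t j‖ = 1 := by
    intro t j
    have : (t : ℂ) * ((θ j : ℂ) * Complex.I) = ((t * θ j : ℝ) : ℂ) * Complex.I := by
      push_cast; ring
    simp only [e]
    rw [this, Complex.norm_exp_ofReal_mul_I]
  let γ : ℝ → Op N := fun t => Dg b (e t) * (u : Op N)
  let f : ℝ → ℝ := fun t => φ + t * (ψ - φ)
  have hderiv : ∀ t, HasDerivAt γ (Dg b (fun j => e t j * ((θ j : ℂ) * Complex.I)) * (u : Op N)) t := by
    intro t
    refine HasDerivAt.mul_const ?_ _
    unfold Dg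
    refine HasDerivAt.fun_sum fun j _ => ?_
    have h1 : HasDerivAt (fun t : ℝ => (t : ℂ) * ((θ j : ℂ) * Complex.I))
        (1 * ((θ j : ℂ) * Complex.I)) t := (Complex.ofRealCLM.hasDerivAt (x := t)).mul_const _
    rw [one_mul] at h1
    exact HasDerivAt.smul_const h1.cexp ((innerSL ℂ (b j)).smulRight (b j))
  have hcd : ContDiff ℝ 1 γ := by
    refine ContDiff.mul ?_ contDiff_const
    unfold Dg
    refine ContDiff.sum fun j _ => ?_
    have h1 : ContDiff ℝ 1 (fun t => e t j) := by
      refine ContDiff.cexp ?_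
      exact Complex.ofRealCLM.contDiff.mul contDiff_const
    exact h1.smul (contDiff_const (c := ((innerSL ℂ (b j)).smulRight (b j) : Op N)))
  have hcf : ContDiff ℝ 1 f := contDiff_const.add (contDiff_id.mul contDiff_const)
  have hun : ‖(u : Op N)‖ ≤ 1 := by
    refine ContinuousLinearMap.opNorm_le_bound _ zero_le_one fun x => ?_
    rw [one_mul, ContinuousLinearMap.norm_map_of_mem_unitary u.2]
  have hlen : pathLength γ 0 1 ≤ M := by
    have hb' : ∀ t, ‖deriv γ t‖ ≤ M := by
      intro t
      rw [(hderiv t).deriv]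
      refine (norm_mul_le _ _).trans ?_
      refine (mul_le_of_le_one_right (norm_nonneg _) hun).trans ?_
      refine Dg_norm b _ M hM0 fun j => ?_
      rw [norm_mul, he, norm_mul, Complex.norm_I]
      simpa using hM j
    have := intervalIntegral.norm_integral_le_of_norm_le_const (a := (0:ℝ)) (b := 1) (C := M)
      (f := fun t => ‖deriv γ t‖) (fun t _ => by simpa using hb' t)
    simp only [sub_zero, abs_one, mul_one] at this
    exact (le_abs_self _).trans this
  refine le_trans (csInf_le ?_ ?_) hlen
  · refine ⟨0, ?_⟩
    rintro l ⟨a, c, g, k, hac, -, -, -, -, -, -, rfl⟩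
    exact intervalIntegral.integral_nonneg hac fun t _ => norm_nonneg _
  · refine ⟨0, 1, γ, f, zero_le_one, ⟨1, fun n => n, by simp, by simp, by simp, ?_⟩, ?_, ?_, ?_, ?_, ?_, rfl⟩
    · intro i _
      exact (hcd.prodMk hcf).contDiffOn
    · intro t _
      refine ⟨mul_mem (Dg_unitary b _ (he t)) u.2, ?_⟩
      have : ((γ t : Op N) : Hsp N →ₗ[ℂ] Hsp N) =
        (Dg b (e t) : Hsp N →ₗ[ℂ] Hsp N) * ((u : Op N) : Hsp N →ₗ[ℂ] Hsp N) := rfl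
      rw [this, map_mul, Dg_det, hu.2]
      simp only [e, f]
      rw [← Complex.exp_sum, ← Complex.exp_add, ← Finset.mul_sum, ← Finset.sum_mul, ← hsum]
      congr 1
      push_cast
      ring
    · have : e 0 = 1 := by ext j; simp [e]
      simp only [γ]
      rw [this, Dg_one, one_mul]
    · simp [f]
    · have : Dg b (e 1) = ((v * u⁻¹ : unitary (Op N)) : Op N) := by
        apply op_ext b
        intro i
        rw [hb, Dg_basis]
        simp [e]
      simp only [γ]
      rw [this, ← Submonoid.coe_mul, inv_mul_cancel_right]
    · simp [f]

/-- for `(u,φ), (v,ψ) ∈ Ũ(H)` and any `θ ∈ R`,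
`d̃((u,φ),(v,ψ)) ≤ max_j |θ_j|`; consequently `d̃((u,φ),(v,ψ)) ≤ m`. -/
theorem ucoverDist_le_max_theta (N : ℕ) (hN : 1 ≤ N) (u v : unitary (Op N))
    (φ ψ : ℝ) (hu : InUCover N ↑u φ) (hv : InUCover N ↑v ψ)
    (θ : Fin N → ℝ) (hθ : InRSet N ↑(v * u⁻¹) (ψ - φ) θ) :
    (ucoverDist N ↑u φ ↑v ψ ≤ ⨆ j, |θ j|) ∧
      ucoverDist N ↑u φ ↑v ψ ≤ mval N ↑(v * u⁻¹) (ψ - φ) := by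
  refine ⟨ucoverDist_le_theta_aux N u v φ ψ hu θ hθ, ?_⟩
  refine le_csInf ⟨_, θ, hθ, rfl⟩ ?_
  rintro x ⟨θ', hθ', rfl⟩
  exact ucoverDist_le_theta_aux N u v φ ψ hu θ' hθ'
end

section
/- For any (u,φ), (v,ψ) ∈ Ũ(H), one has |ψ − φ|/N ≤ d̃((u,φ), (v,ψ)) ≤ |ψ − φ|/N + 2π. -/
open scoped Matrix.Norms.L2Operator in
theorem mat_spec {N : ℕ} (W : Matrix (Fin N) (Fin N) ℂ)
    (hW : W ∈ unitary (Matrix (Fin N) (Fin N) ℂ)) :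
    ∃ (U : unitary (Matrix (Fin N) (Fin N) ℂ)) (a : Fin N → ℝ),
      W = (U : Matrix (Fin N) (Fin N) ℂ) *
        Matrix.diagonal (fun j => Complex.exp (a j * Complex.I)) *
        star (U : Matrix (Fin N) (Fin N) ℂ) := by
  have hfin : (spectrum ℂ W).Finite := Matrix.finite_spectrum W
  have hn : IsStarNormal W := isStarNormal_of_mem_unitary hW
  have hc : ContinuousOn (Complex.ofReal ∘ Complex.arg : ℂ → ℂ) (spectrum ℂ W) :=
    hfin.continuousOn _
  have hA : (cfc (Complex.ofReal ∘ Complex.arg : ℂ → ℂ) W).IsHermitian := IsSelfAdjoint.cfc_arg W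
  have hexp : NormedSpace.exp (Complex.I • cfc (Complex.ofReal ∘ Complex.arg : ℂ → ℂ) W) = W := by
    rw [← CFC.exp_eq_normedSpace_exp (𝕜 := ℂ), ← cfc_comp_smul .., ← cfc_comp' ..]
    conv_rhs => rw [← cfc_id' ℂ W]
    refine cfc_congr fun y hy ↦ ?_
    have hy₁ : ‖y‖ = 1 := spectrum.norm_eq_one_of_unitary hW hy
    have : Complex.I * y.arg = Complex.log y :=
      Complex.ext (by simp [Complex.log_re, hy₁]) (by simp [Complex.log_im])
    have hy0 : y ≠ 0 := by rintro rfl; simp at hy₁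
    simpa [← Complex.exp_eq_exp_ℂ, this] using Complex.exp_log hy0
  refine ⟨hA.eigenvectorUnitary, hA.eigenvalues, ?_⟩
  have h1 := hA.spectral_theorem
  rw [Unitary.conjStarAlgAut_apply] at h1
  conv_lhs => rw [← hexp, h1]
  have h2 := Matrix.exp_units_conj (Unitary.toUnits hA.eigenvectorUnitary)
    (Complex.I • Matrix.diagonal (RCLike.ofReal ∘ hA.eigenvalues : Fin N → ℂ))
  rw [← Matrix.diagonal_smul, Matrix.exp_diagonal] at h2
  have h3 : NormedSpace.exp (Complex.I • (RCLike.ofReal ∘ hA.eigenvalues : Fin N → ℂ)) =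
      fun j => Complex.exp (hA.eigenvalues j * Complex.I) := by
    funext j
    rw [Pi.coe_exp, ← Complex.exp_eq_exp_ℂ]
    simp [mul_comm]
  rw [h3] at h2
  rw [← Matrix.smul_mul, ← Matrix.mul_smul, ← Matrix.diagonal_smul]
  exact h2

theorem det_clm {N : ℕ} (A : Matrix (Fin N) (Fin N) ℂ) :
    LinearMap.det ((Matrix.toEuclideanCLM (n := Fin N) (𝕜 := ℂ) A : Op N) : Hsp N →ₗ[ℂ] Hsp N)
      = A.det := by
  rw [Matrix.coe_toEuclideanCLM_eq_toEuclideanLin, Matrix.toEuclideanLin_eq_toLin,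
    LinearMap.det_toLin]

open scoped Matrix.Norms.L2Operator in
theorem op_spec {N : ℕ} (w : Op N) (hw : w ∈ unitary (Op N)) :
    ∃ (L : (Fin N → ℂ) →ₗ[ℂ] Op N) (a : Fin N → ℝ),
      (∀ c, ‖L c‖ = ‖c‖) ∧ (∀ c, (∀ j, ‖c j‖ = 1) → L c ∈ unitary (Op N)) ∧
      (∀ c, LinearMap.det (L c : Hsp N →ₗ[ℂ] Hsp N) = ∏ j, c j) ∧ L 1 = 1 ∧
      w = L (fun j => Complex.exp (a j * Complex.I)) := by
  let T := Matrix.toEuclideanCLM (n := Fin N) (𝕜 := ℂ)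
  obtain ⟨U, a, h⟩ := mat_spec (T.symm w) (Unitary.map_mem T.symm hw)
  let L : (Fin N → ℂ) →ₗ[ℂ] Op N :=
    { toFun := fun c => T ((U : Matrix (Fin N) (Fin N) ℂ) * Matrix.diagonal c *
        star (U : Matrix (Fin N) (Fin N) ℂ))
      map_add' := fun c d => by
        have : Matrix.diagonal (c + d) = Matrix.diagonal c + Matrix.diagonal d :=
          (Matrix.diagonal_add c d).symm
        rw [← map_add, this, Matrix.mul_add, Matrix.add_mul]
      map_smul' := fun c d => by
        rw [Matrix.diagonal_smul, Matrix.mul_smul, Matrix.smul_mul, map_smul]; rfl }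
  have hL : ∀ c, L c = T ((U : Matrix (Fin N) (Fin N) ℂ) * Matrix.diagonal c *
        star (U : Matrix (Fin N) (Fin N) ℂ)) := fun c => rfl
  refine ⟨L, a, ?_, ?_, ?_, ?_, ?_⟩
  · intro c
    rw [hL, Matrix.l2_opNorm_toEuclideanCLM, ← Unitary.coe_star, CStarRing.norm_mul_coe_unitary,
      CStarRing.norm_coe_unitary_mul, Matrix.l2_opNorm_diagonal]
  · intro c hc
    rw [hL]
    refine Unitary.map_mem T (mul_mem (mul_mem U.2 ?_) (star U).2)
    have hcc : ∀ j, star (c j) * c j = 1 := fun j => by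
      have := Complex.conj_mul' (c j)
      rw [hc j] at this
      simpa using this
    rw [Unitary.mem_iff, Matrix.star_eq_conjTranspose, Matrix.diagonal_conjTranspose,
      Matrix.diagonal_mul_diagonal, Matrix.diagonal_mul_diagonal]
    constructor
    · rw [← Matrix.diagonal_one]; congr 1; funext j; exact hcc j
    · rw [← Matrix.diagonal_one]; congr 1; funext j; rw [mul_comm]; exact hcc j
  · intro c
    rw [hL, det_clm, Matrix.det_mul_right_comm, Unitary.mul_star_self_of_mem U.2, Matrix.one_mul,
      Matrix.det_diagonal]
  · rw [hL]
    have : Matrix.diagonal (1 : Fin N → ℂ) = 1 := Matrix.diagonal_one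
    rw [this, Matrix.mul_one, Unitary.mul_star_self_of_mem U.2, map_one]
  · rw [hL, ← h]; simp

theorem prod_sub_one_le {ι : Type*} (s : Finset ι) (d : ι → ℂ) (hd : ∀ j, ‖d j‖ = 1) :
    ‖∏ j ∈ s, d j - 1‖ ≤ ∑ j ∈ s, ‖d j - 1‖ := by
  classical
  induction s using Finset.induction_on with
  | empty => simp
  | insert i s hi ih =>
    rw [Finset.prod_insert hi, Finset.sum_insert hi]
    have : d i * ∏ j ∈ s, d j - 1 = d i * (∏ j ∈ s, d j - 1) + (d i - 1) := by ring
    rw [this]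
    refine (norm_add_le _ _).trans ?_
    rw [norm_mul, hd i]
    linarith

theorem det_lip {N : ℕ} (u v : Op N) (hu : u ∈ unitary (Op N)) (hv : v ∈ unitary (Op N)) :
    ‖LinearMap.det (v : Hsp N →ₗ[ℂ] Hsp N) - LinearMap.det (u : Hsp N →ₗ[ℂ] Hsp N)‖
      ≤ N * ‖v - u‖ := by
  have hw : star u * v ∈ unitary (Op N) := mul_mem (Unitary.star_mem hu) hv
  obtain ⟨L, a, hn, -, hdet, h1, hwL⟩ := op_spec _ hw
  set d : Fin N → ℂ := fun j => Complex.exp (a j * Complex.I) with hd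
  have hv' : v = u * L d := by
    rw [← hwL, ← mul_assoc, Unitary.mul_star_self_of_mem hu, one_mul]
  have hdetv : LinearMap.det (v : Hsp N →ₗ[ℂ] Hsp N)
      = LinearMap.det (u : Hsp N →ₗ[ℂ] Hsp N) * ∏ j, d j := by
    rw [hv', ← hdet d, ← LinearMap.det_comp]; rfl
  have hdetu : ‖LinearMap.det (u : Hsp N →ₗ[ℂ] Hsp N)‖ = 1 := by
    obtain ⟨L', a', -, -, hdet', -, hw'⟩ := op_spec _ hu
    rw [hw', hdet', norm_prod]
    exact Finset.prod_eq_one fun j _ => Complex.norm_exp_ofReal_mul_I _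
  have hnorm : ‖v - u‖ = ‖d - 1‖ := by
    have : v - u = u * L (d - 1) := by rw [map_sub, h1, mul_sub, ← hv', mul_one]
    rw [this, CStarRing.norm_mem_unitary_mul _ hu, hn]
  rw [hdetv, hnorm]
  have : LinearMap.det (u : Hsp N →ₗ[ℂ] Hsp N) * ∏ j, d j - LinearMap.det (u : Hsp N →ₗ[ℂ] Hsp N)
    = LinearMap.det (u : Hsp N →ₗ[ℂ] Hsp N) * (∏ j, d j - 1) := by ring
  rw [this, norm_mul, hdetu, one_mul]
  refine (prod_sub_one_le _ _ fun j => Complex.norm_exp_ofReal_mul_I _).trans ?_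
  calc ∑ j, ‖d j - 1‖ ≤ ∑ j : Fin N, ‖d - 1‖ :=
        Finset.sum_le_sum fun j _ => norm_le_pi_norm (d - 1) j
    _ = _ := by simp

theorem angles {N : ℕ} (hN : 1 ≤ N) (a : Fin N → ℝ) (c : ℝ)
    (h : ∏ j, Complex.exp (a j * Complex.I) = Complex.exp (c * Complex.I)) :
    ∃ θ : Fin N → ℝ, (∀ j, Complex.exp (θ j * Complex.I) = Complex.exp (a j * Complex.I)) ∧
      ∑ j, θ j = c ∧ ∀ j, |θ j| ≤ |c| / N + 2 * Real.pi := by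
  have hN' : (0 : ℝ) < N := by exact_mod_cast hN
  have hpi := Real.two_pi_pos
  set m : ℝ := c / N with hm
  have hmc : N * m = c := by rw [hm]; field_simp
  set b : Fin N → ℝ := fun j => toIcoMod hpi m (a j) with hb
  have hb1 : ∀ j, m ≤ b j := fun j => left_le_toIcoMod _ _ _
  have hb2 : ∀ j, b j ≤ m + 2 * Real.pi := fun j => (toIcoMod_lt_right _ _ _).le
  have hper : ∀ (x : ℝ) (k : ℤ), Complex.exp (((x - k * (2 * Real.pi) : ℝ) : ℂ) * Complex.I)
      = Complex.exp (x * Complex.I) := by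
    intro x k
    rw [Complex.exp_eq_exp_iff_exists_int]
    exact ⟨-k, by push_cast; ring⟩
  have hbe : ∀ j, Complex.exp (b j * Complex.I) = Complex.exp (a j * Complex.I) := by
    intro j
    rw [← hper (a j) (toIcoDiv hpi m (a j))]
    simp only [hb, toIcoMod, zsmul_eq_mul]
  obtain ⟨k, hk⟩ : ∃ k : ℤ, ∑ j, b j = c + k * (2 * Real.pi) := by
    have : Complex.exp ((∑ j, b j : ℝ) * Complex.I) = Complex.exp (c * Complex.I) := by
      rw [← h, Complex.ofReal_sum, Finset.sum_mul, Complex.exp_sum]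
      exact Finset.prod_congr rfl fun j _ => hbe j
    rw [Complex.exp_eq_exp_iff_exists_int] at this
    obtain ⟨k, hk⟩ := this
    refine ⟨k, ?_⟩
    have := congrArg Complex.im hk
    simpa using this
  have hk0 : 0 ≤ k := by
    have h1 : ∑ j : Fin N, m ≤ ∑ j, b j := Finset.sum_le_sum fun j _ => hb1 j
    simp only [Finset.sum_const, Finset.card_univ, Fintype.card_fin, nsmul_eq_mul] at h1
    rw [hmc, hk] at h1
    have : (0 : ℝ) ≤ k := by
      by_contra hneg
      push Not at hneg
      nlinarith
    exact_mod_cast this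
  have hkN : k ≤ N := by
    have h1 : ∑ j, b j ≤ ∑ j : Fin N, (m + 2 * Real.pi) := Finset.sum_le_sum fun j _ => hb2 j
    simp only [Finset.sum_const, Finset.card_univ, Fintype.card_fin, nsmul_eq_mul] at h1
    rw [mul_add, hmc, hk] at h1
    have : (k : ℝ) ≤ N := by
      by_contra hneg
      push Not at hneg
      nlinarith
    exact_mod_cast this
  obtain ⟨n, rfl⟩ := Int.eq_ofNat_of_zero_le hk0
  have hnN : n ≤ N := by exact_mod_cast hkN
  refine ⟨fun j => b j - ((if (j : ℕ) < n then 1 else 0 : ℤ) : ℝ) * (2 * Real.pi), ?_, ?_, ?_⟩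
  · intro j
    rw [hper, hbe]
  · rw [Finset.sum_sub_distrib, hk, ← Finset.sum_mul]
    have : ∑ j : Fin N, (((if (j : ℕ) < n then 1 else 0 : ℤ)) : ℝ) = n := by
      push_cast
      rw [Finset.sum_boole, Fin.card_filter_val_lt]
      simp [hnN]
    rw [this]; simp
  · intro j
    have hmm : |m| = |c| / N := by rw [hm, abs_div, abs_of_pos hN']
    rw [← hmm]
    have h1 := hb1 j
    have h2 := hb2 j
    have h3 := neg_abs_le m
    have h4 := le_abs_self m
    rw [abs_le]
    dsimp only
    split_ifs
    · push_cast; constructor <;> linarith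
    · push_cast; constructor <;> linarith

theorem exists_path {N : ℕ} (hN : 1 ≤ N) (u v : Op N) (φ ψ : ℝ)
    (hu : InUCover N u φ) (hv : InUCover N v ψ) :
    ∃ (γ : ℝ → Op N) (f : ℝ → ℝ), 
    PiecewiseC1On (fun t => (γ t, f t)) 0 1 ∧
    (∀ t ∈ Set.Icc (0:ℝ) 1, InUCover N (γ t) (f t)) ∧
    γ 0 = u ∧ f 0 = φ ∧ γ 1 = v ∧ f 1 = ψ ∧
    pathLength γ 0 1 ≤ |ψ - φ| / (N : ℝ) + 2 * Real.pi := by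
  have hw : star u * v ∈ unitary (Op N) := mul_mem (Unitary.star_mem hu.1) hv.1
  obtain ⟨L, a, hn, hun, hdet, h1, hwL⟩ := op_spec _ hw
  have hv' : v = u * L (fun j => Complex.exp (a j * Complex.I)) := by
    rw [← hwL, ← mul_assoc, Unitary.mul_star_self_of_mem hu.1, one_mul]
  have hmul : ∀ c, LinearMap.det ((u * L c : Op N) : Hsp N →ₗ[ℂ] Hsp N)
      = Complex.exp (φ * Complex.I) * ∏ j, c j := by
    intro c
    rw [← hdet c, ← hu.2, ← LinearMap.det_comp]; rfl
  have hprod : ∏ j, Complex.exp (a j * Complex.I) = Complex.exp ((ψ - φ : ℝ) * Complex.I) := by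
    have h2 := hmul (fun j => Complex.exp (a j * Complex.I))
    rw [← hv', hv.2] at h2
    apply mul_left_cancel₀ (Complex.exp_ne_zero (φ * Complex.I))
    rw [← h2, ← Complex.exp_add]
    congr 1; push_cast; ring
  obtain ⟨θ, hθ1, hθ2, hθ3⟩ := angles hN a _ hprod
  let M : (Fin N → ℂ) →L[ℂ] Op N :=
    (ContinuousLinearMap.mul ℂ (Op N) u).comp (LinearMap.toContinuousLinearMap L)
  have hM : ∀ c, M c = u * L c := fun c => rfl
  let e : ℝ → Fin N → ℂ := fun t j => Complex.exp ((t * θ j : ℝ) * Complex.I)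
  have he : ContDiff ℝ 1 e := by
    rw [contDiff_pi]
    intro j
    refine ContDiff.cexp (ContDiff.mul ?_ contDiff_const)
    exact Complex.ofRealCLM.contDiff.comp (contDiff_id.mul contDiff_const)
  have hder : ∀ t, HasDerivAt e (fun j => Complex.exp ((t * θ j : ℝ) * Complex.I) *
      (θ j * Complex.I)) t := by
    intro t
    rw [hasDerivAt_pi]
    intro j
    have h3 : HasDerivAt (fun t : ℝ => (t * θ j : ℝ)) (θ j) t := by
      simpa using (hasDerivAt_id t).mul_const (θ j)
    exact (h3.ofReal_comp.mul_const Complex.I).cexp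
  refine ⟨fun t => M (e t), fun t => φ + t * (ψ - φ), ?_, ?_, ?_, ?_, ?_, ?_, ?_⟩
  · refine ⟨1, fun i => i, by simp, by simp, by simp, fun i _ => ContDiff.contDiffOn ?_⟩
    refine ContDiff.prodMk ?_ ?_
    · exact (M.restrictScalars ℝ).contDiff.comp he
    · exact contDiff_const.add (contDiff_id.mul contDiff_const)
  · intro t _
    refine ⟨?_, ?_⟩
    · exact mul_mem hu.1 (hun _ fun j => Complex.norm_exp_ofReal_mul_I _)
    · change LinearMap.det ((u * L (e t) : Op N) : Hsp N →ₗ[ℂ] Hsp N) =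
        Complex.exp ((φ + t * (ψ - φ) : ℝ) * Complex.I)
      rw [hmul, ← Complex.exp_sum, ← Complex.exp_add, ← Finset.sum_mul, ← Complex.ofReal_sum,
        ← Finset.mul_sum, hθ2]
      congr 1; push_cast; ring
  · have : e 0 = 1 := by funext j; simp [e]
    simp only [hM, this, h1, mul_one]
  · simp
  · have : e 1 = fun j => Complex.exp (a j * Complex.I) := by
      funext j; simp only [e, one_mul]; exact hθ1 j
    simp only [hM, this, ← hv']
  · ring
  · have hbd : ∀ t, ‖deriv (fun t => M (e t)) t‖ ≤ |ψ - φ| / (N : ℝ) + 2 * Real.pi := by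
      intro t
      have h4 := ((M.restrictScalars ℝ).hasFDerivAt.comp_hasDerivAt t (hder t)).deriv
      have h5 : deriv (fun t => M (e t)) t = M (fun j => Complex.exp ((t * θ j : ℝ) * Complex.I) *
        (θ j * Complex.I)) := h4
      rw [h5, hM, CStarRing.norm_mem_unitary_mul _ hu.1, hn,
        pi_norm_le_iff_of_nonneg (by positivity)]
      intro j
      rw [norm_mul, Complex.norm_exp_ofReal_mul_I]
      simpa using hθ3 j
    have := intervalIntegral.norm_integral_le_of_norm_le_const (a := 0) (b := 1)
      (f := fun t => ‖deriv (fun t => M (e t)) t‖) (C := |ψ - φ| / (N : ℝ) + 2 * Real.pi)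
      (fun t _ => by simpa using hbd t)
    unfold pathLength
    refine (le_abs_self _).trans (this.trans ?_)
    simp

theorem deriv_bound {N : ℕ} (γ : ℝ → Op N) (f : ℝ → ℝ) (s t : ℝ)
    (ht : ∀ x ∈ Set.Ioo s t, InUCover N (γ x) (f x)) (x : ℝ) (hx : x ∈ Set.Ioo s t)
    (hγ : DifferentiableAt ℝ γ x) (hf : DifferentiableAt ℝ f x) :
    |deriv f x| ≤ N * ‖deriv γ x‖ := by
  have h1 : HasDerivAt (fun y => Complex.exp (f y * Complex.I))
      (Complex.exp (f x * Complex.I) * (deriv f x * Complex.I)) x :=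
    (hf.hasDerivAt.ofReal_comp.mul_const Complex.I).cexp
  have h2 := h1.tendsto_slope.norm
  have h3 := (hγ.hasDerivAt.tendsto_slope.norm).const_mul (N : ℝ)
  have h4 : ‖Complex.exp (f x * Complex.I) * (deriv f x * Complex.I)‖ = |deriv f x| := by
    rw [norm_mul, Complex.norm_exp_ofReal_mul_I]; simp
  rw [← h4]
  refine le_of_tendsto_of_tendsto h2 h3 ?_
  have : ∀ᶠ y in nhdsWithin x {x}ᶜ, y ∈ Set.Ioo s t :=
    nhdsWithin_le_nhds (Ioo_mem_nhds hx.1 hx.2)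
  filter_upwards [this] with y hy
  rw [slope_def_module, slope_def_module, norm_smul, norm_smul, ← (ht x hx).2, ← (ht y hy).2]
  have := det_lip _ _ (ht x hx).1 (ht y hy).1
  calc _ ≤ ‖(y - x)⁻¹‖ * (N * ‖γ y - γ x‖) := by gcongr
    _ = _ := by ring

theorem piece_s10 {N : ℕ} (γ : ℝ → Op N) (f : ℝ → ℝ) (s t : ℝ) (hst : s ≤ t)
    (ht : ∀ x ∈ Set.Icc s t, InUCover N (γ x) (f x))
    (hC : ContDiffOn ℝ 1 (fun t => (γ t, f t)) (Set.Icc s t)) :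
    IntervalIntegrable (fun x => ‖deriv γ x‖) MeasureTheory.volume s t ∧
    |f t - f s| ≤ N * ∫ x in s..t, ‖deriv γ x‖ := by
  rcases hst.eq_or_lt with rfl | hlt
  · simp
  have hCγ : ContDiffOn ℝ 1 γ (Set.Icc s t) := hC.fst
  have hCf : ContDiffOn ℝ 1 f (Set.Icc s t) := hC.snd
  have hint : ∀ {E : Type} [NormedAddCommGroup E] [NormedSpace ℝ E] (g : ℝ → E),
      ContDiffOn ℝ 1 g (Set.Icc s t) →
      IntervalIntegrable (fun x => deriv g x) MeasureTheory.volume s t := by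
    intro E _ _ g hg
    have h1 : ContinuousOn (derivWithin g (Set.Icc s t)) (Set.Icc s t) :=
      hg.continuousOn_derivWithin (uniqueDiffOn_Icc hlt) le_rfl
    have h2 : IntervalIntegrable (derivWithin g (Set.Icc s t)) MeasureTheory.volume s t :=
      ContinuousOn.intervalIntegrable (by rwa [Set.uIcc_of_le hst])
    refine h2.congr_uIoo ?_
    intro x hx
    rw [Set.uIoo_of_le hst] at hx
    exact derivWithin_of_mem_nhds (Icc_mem_nhds hx.1 hx.2)
  have hI := (hint γ hCγ).norm
  refine ⟨hI, ?_⟩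
  have hdiff : ∀ {E : Type} [NormedAddCommGroup E] [NormedSpace ℝ E] (g : ℝ → E),
      ContDiffOn ℝ 1 g (Set.Icc s t) → ∀ x ∈ Set.Ioo s t, DifferentiableAt ℝ g x := by
    intro E _ _ g hg x hx
    exact (hg.differentiableOn one_ne_zero).differentiableAt (Icc_mem_nhds hx.1 hx.2)
  have hftc := intervalIntegral.integral_eq_sub_of_hasDerivAt_of_le hst hCf.continuousOn
    (fun x hx => (hdiff f hCf x hx).hasDerivAt) (hint f hCf)
  rw [← hftc, ← intervalIntegral.integral_const_mul]
  refine (intervalIntegral.abs_integral_le_integral_abs hst).trans ?_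
  refine intervalIntegral.integral_mono_on_of_le_Ioo hst (hint f hCf).abs (hI.const_mul _) ?_
  intro x hx
  exact deriv_bound γ f s t (fun y hy => ht y (Set.Ioo_subset_Icc_self hy)) x hx
    (hdiff γ hCγ x hx) (hdiff f hCf x hx)

theorem lower {N : ℕ} (a b : ℝ) (γ : ℝ → Op N) (f : ℝ → ℝ)
    (hp : PiecewiseC1On (fun t => (γ t, f t)) a b)
    (hc : ∀ t ∈ Set.Icc a b, InUCover N (γ t) (f t)) :
    |f b - f a| ≤ N * pathLength γ a b := by
  obtain ⟨n, τ, h0, hn, hmono, hC⟩ := hp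
  have key : ∀ k ≤ n, a ≤ τ k := by
    intro k
    induction k with
    | zero => intro _; exact h0.ge
    | succ k ih => intro hk; exact (ih (by omega)).trans (hmono k (by omega))
  have key2 : ∀ j k, j ≤ k → k ≤ n → τ j ≤ τ k := by
    intro j k hjk
    induction k, hjk using Nat.le_induction with
    | base => intro _; exact le_rfl
    | succ k _ ih => intro hk; exact (ih (by omega)).trans (hmono k (by omega))
  have hpiece : ∀ k < n, IntervalIntegrable (fun x => ‖deriv γ x‖) MeasureTheory.volume
      (τ k) (τ (k+1)) ∧ |f (τ (k+1)) - f (τ k)| ≤ N * ∫ x in (τ k)..(τ (k+1)), ‖deriv γ x‖ := by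
    intro k hk
    refine piece_s10 γ f _ _ (hmono k hk) (fun x hx => hc x ⟨?_, ?_⟩) (hC k hk)
    · exact (key k hk.le).trans hx.1
    · exact hx.2.trans (hn ▸ key2 (k+1) n hk le_rfl)
  unfold pathLength
  rw [← h0, ← hn, ← intervalIntegral.sum_integral_adjacent_intervals (fun k hk => (hpiece k hk).1),
    ← Finset.sum_range_sub (fun k => f (τ k)), Finset.mul_sum]
  refine (Finset.abs_sum_le_sum_abs _ _).trans (Finset.sum_le_sum fun k hk => ?_)
  exact (hpiece k (Finset.mem_range.1 hk)).2

/-- for `(u,φ), (v,ψ) ∈ Ũ(H)`,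
`|ψ − φ|/N ≤ d̃((u,φ),(v,ψ)) ≤ |ψ − φ|/N + 2π`. -/
theorem ucoverDist_bounds (N : ℕ) (hN : 1 ≤ N) (u v : Op N) (φ ψ : ℝ)
    (hu : InUCover N u φ) (hv : InUCover N v ψ) :
    |ψ - φ| / (N : ℝ) ≤ ucoverDist N u φ v ψ ∧
      ucoverDist N u φ v ψ ≤ |ψ - φ| / (N : ℝ) + 2 * Real.pi := by
  have hN' : (0 : ℝ) < N := by exact_mod_cast hN
  obtain ⟨γ, f, h1, h2, h3, h4, h5, h6, h7⟩ := exists_path hN u v φ ψ hu hv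
  have hlow : ∀ l ∈ {l | ∃ (a b : ℝ) (γ : ℝ → Op N) (f : ℝ → ℝ), a ≤ b ∧
      PiecewiseC1On (fun t => (γ t, f t)) a b ∧
      (∀ t ∈ Set.Icc a b, InUCover N (γ t) (f t)) ∧
      γ a = u ∧ f a = φ ∧ γ b = v ∧ f b = ψ ∧
      l = pathLength γ a b}, |ψ - φ| / (N : ℝ) ≤ l := by
    rintro l ⟨a, b, γ, f, hab, hp, hc, -, ha, -, hb, rfl⟩
    rw [div_le_iff₀ hN', ← ha, ← hb, mul_comm]
    exact lower a b γ f hp hc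
  constructor
  · exact le_csInf ⟨_, 0, 1, γ, f, zero_le_one, h1, h2, h3, h4, h5, h6, rfl⟩ hlow
  · exact (csInf_le ⟨_, hlow⟩ ⟨0, 1, γ, f, zero_le_one, h1, h2, h3, h4, h5, h6, rfl⟩).trans h7
end
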